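/- Let Γ be a finitely generated virtually abelian group and let μ be an aperiodic probability measure on Γ with finite second moment whose support generates Γ as a semigroup. Then for every ρ ∈ (0,1] one has ‖π^ρ_n − μ_n×μ_n‖_TV → 0 as n → ∞ (i.e. the μ-random walk on Γ is noise sensitive in total variation) if and only if every group homomorphism from Γ to ℤ is the zero homomorphism. -/

import Mathlib

open scoped BigOperators Classical
open Filter Matrix MeasureTheory

namespace NSVA

noncomputable section

/-- Convolution of two real-valued functions on a group. -/
def conv {G : Type*} [Group G] (μ ν : G → ℝ) : G → ℝ :=
  fun g => ∑' h : G, μ h * ν (h⁻¹ * g)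

/-- Convolution powers: `convPow μ 0 = δ_1`, `convPow μ (n+1) = (convPow μ n) * μ`. -/
def convPow {G : Type*} [Group G] (μ : G → ℝ) : ℕ → G → ℝ
  | 0 => fun g => if g = 1 then 1 else 0
  | n + 1 => conv (convPow μ n) μ

/-- A probability measure on a countable set, viewed as a function. -/
def IsProb {G : Type*} (μ : G → ℝ) : Prop := (∀ g, 0 ≤ μ g) ∧ HasSum μ 1

/-- The support of `μ` generates the group as a semigroup. -/
def Nondeg {G : Type*} [Group G] (μ : G → ℝ) : Prop :=
  ∀ g : G, g ∈ Subsemigroup.closure {x : G | 0 < μ x}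

/-- `μ` is aperiodic: `μ_n(1) > 0` for all large enough `n`. -/
def Aperiodic {G : Type*} [Group G] (μ : G → ℝ) : Prop :=
  ∃ N : ℕ, ∀ n : ℕ, N ≤ n → 0 < convPow μ n 1

/-- Total variation distance between two (probability) functions. -/
def tv {Z : Type*} (p q : Z → ℝ) : ℝ := (1 / 2) * ∑' z : Z, |p z - q z|

/-- Word length with respect to a finite set `S₀`. -/
def wordLength {G : Type*} [Group G] (S₀ : Finset G) (g : G) : ℕ :=
  sInf {n : ℕ | ∃ l : List G, (∀ s ∈ l, s ∈ S₀) ∧ l.length = n ∧ l.prod = g}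

/-- Finite second moment with respect to a word metric given by a finite symmetric
generating set. -/
def FinSecondMoment {G : Type*} [Group G] (μ : G → ℝ) : Prop :=
  ∃ S₀ : Finset G, (∀ s ∈ S₀, s⁻¹ ∈ S₀) ∧ Subgroup.closure (S₀ : Set G) = ⊤ ∧
    Summable (fun g : G => (wordLength S₀ g : ℝ) ^ 2 * μ g)

/-- A group is virtually abelian if it has an abelian subgroup of finite index. -/
def VirtAbelian (G : Type*) [Group G] : Prop :=
  ∃ A : Subgroup G, A.index ≠ 0 ∧ ∀ a b : A, a * b = b * a

/-- The noised measure `π^ρ` on `G × G`. -/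
def noised {G : Type*} (μ : G → ℝ) (ρ : ℝ) : G × G → ℝ :=
  fun p => ρ * μ p.1 * μ p.2 + (1 - ρ) * μ p.1 * (if p.1 = p.2 then 1 else 0)

/-- First marginal of a measure on a product. -/
def marg1 {G₁ G₂ : Type*} (ν : G₁ × G₂ → ℝ) : G₁ → ℝ := fun γ₁ => ∑' γ₂ : G₂, ν (γ₁, γ₂)

/-- Second marginal of a measure on a product. -/
def marg2 {G₁ G₂ : Type*} (ν : G₁ × G₂ → ℝ) : G₂ → ℝ := fun γ₂ => ∑' γ₁ : G₁, ν (γ₁, γ₂)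

/-- A system of representatives of the right cosets `Λ\Γ` containing the identity,
together with the representative map `rep`, constant on right cosets. -/
structure RepSystem {Γ : Type*} [Group Γ] (Λ : Subgroup Γ) where
  Δ : Finset Γ
  one_mem : (1 : Γ) ∈ Δ
  rep : Γ → Γ
  rep_mem : ∀ γ : Γ, rep γ ∈ Δ
  rep_spec : ∀ γ : Γ, γ * (rep γ)⁻¹ ∈ Λ
  rep_idem : ∀ x ∈ Δ, rep x = x
  rep_coset : ∀ γ : Γ, ∀ v ∈ Λ, rep (v * γ) = rep γ

variable {Γ : Type*} [Group Γ] {Λ : Subgroup Γ} {m : ℕ}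

/-- The cocycle `α(x,s) = ψ(x·s·(x^s)⁻¹) ∈ ℤ^m`. -/
def cocycle (ψ : Λ ≃* Multiplicative (Fin m → ℤ)) (R : RepSystem Λ) (x s : Γ) : Fin m → ℤ :=
  Multiplicative.toAdd (ψ ⟨x * s * (R.rep (x * s))⁻¹, R.rep_spec (x * s)⟩)

/-- The transfer homomorphism `θ(γ) = ∑_{x∈Δ} α(x,γ)`. -/
def transfer (ψ : Λ ≃* Multiplicative (Fin m → ℤ)) (R : RepSystem Λ) (γ : Γ) : Fin m → ℤ :=
  ∑ x ∈ R.Δ, cocycle ψ R x γ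

/-- `Φ(γ) = ψ(v)` where `γ = v·x`, `v ∈ Λ`, `x ∈ Δ`. -/
def Phi (ψ : Λ ≃* Multiplicative (Fin m → ℤ)) (R : RepSystem Λ) (γ : Γ) : Fin m → ℤ :=
  Multiplicative.toAdd (ψ ⟨γ * (R.rep γ)⁻¹, R.rep_spec γ⟩)

/-- A 1-form on the quotient diagram. -/
def IsOneForm (R : RepSystem Λ) (ω : Γ → Γ → ℝ) : Prop :=
  ∀ x ∈ R.Δ, ∀ s : Γ, ω (R.rep (x * s)) s⁻¹ = -ω x s

/-- `χ(ω) = ∑_{x∈Δ} ∑_s c(x,s)·ω(x,s)` where `c(x,s) = μ(s)/#F`. -/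
def chi (R : RepSystem Λ) (μ : Γ → ℝ) (ω : Γ → Γ → ℝ) : ℝ :=
  ∑ x ∈ R.Δ, ∑' s : Γ, μ s / (Λ.index : ℝ) * ω x s

/-- Square-integrability of a 1-form. -/
def SqInt (R : RepSystem Λ) (μ : Γ → ℝ) (ω : Γ → Γ → ℝ) : Prop :=
  ∀ x ∈ R.Δ, Summable (fun s : Γ => μ s / (Λ.index : ℝ) * ω x s ^ 2)

/-- Harmonicity of a (square-integrable) 1-form. -/
def Harmonic (R : RepSystem Λ) (μ : Γ → ℝ) (ω : Γ → Γ → ℝ) : Prop :=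
  SqInt R μ ω ∧ ∀ x ∈ R.Δ, (∑' s : Γ, μ s * ω x s) = chi R μ ω

/-- The differential `df(x,s) = f(x^s) − f(x)`. -/
def dd (R : RepSystem Λ) (f : Γ → ℝ) : Γ → Γ → ℝ := fun x s => f (R.rep (x * s)) - f x

/-- `(u, f)` is a harmonic decomposition of the 1-form `ω`: `ω = u + df` with `u`
a harmonic 1-form. -/
def IsHarmDecomp (R : RepSystem Λ) (μ : Γ → ℝ) (ω u : Γ → Γ → ℝ) (f : Γ → ℝ) : Prop :=
  IsOneForm R u ∧ Harmonic R μ u ∧ ∀ x ∈ R.Δ, ∀ s : Γ, ω x s = u x s + dd R f x s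

/-- The 1-form `v̂(x,s) = ⟨v, α(x,s)⟩` (standard inner product). -/
def vhat (ψ : Λ ≃* Multiplicative (Fin m → ℤ)) (R : RepSystem Λ) (v : Fin m → ℝ) :
    Γ → Γ → ℝ :=
  fun x s => ∑ i, v i * (cocycle ψ R x s i : ℝ)

/-- The 1-form `v̂(x,s) = B(v, α(x,s))` for a bilinear form `B`. -/
def vhatB (ψ : Λ ≃* Multiplicative (Fin m → ℤ)) (R : RepSystem Λ)
    (B : (Fin m → ℝ) →ₗ[ℝ] (Fin m → ℝ) →ₗ[ℝ] ℝ) (v : Fin m → ℝ) : Γ → Γ → ℝ :=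
  fun x s => B v (fun i => (cocycle ψ R x s i : ℝ))

/-- The drift `ζ = (1/#F)·∑_{x∈Δ}∑_s μ(s)·α(x,s) ∈ ℝ^m`. -/
def drift (ψ : Λ ≃* Multiplicative (Fin m → ℤ)) (R : RepSystem Λ) (μ : Γ → ℝ) : Fin m → ℝ :=
  fun i => (Λ.index : ℝ)⁻¹ * ∑ x ∈ R.Δ, ∑' s : Γ, μ s * (cocycle ψ R x s i : ℝ)

/-- The covariance pairing `∑_{x,s} c(x,s)·u(x,s)·u'(x,s) − χ(u)·χ(u')`. -/
def cov (R : RepSystem Λ) (μ : Γ → ℝ) (u u' : Γ → Γ → ℝ) : ℝ :=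
  (∑ x ∈ R.Δ, ∑' s : Γ, μ s / (Λ.index : ℝ) * (u x s * u' x s)) - chi R μ u * chi R μ u'

/-- The transfer operator `ℒ_v` acting on functions `Δ → ℂ`. -/
def transferOp (ψ : Λ ≃* Multiplicative (Fin m → ℤ)) (R : RepSystem Λ) (μ : Γ → ℝ)
    (v : Fin m → ℝ) (f : Γ → ℂ) : Γ → ℂ :=
  fun x => ∑' s : Γ, (μ s : ℂ) *
    Complex.exp (2 * Real.pi * Complex.I * ((∑ i, v i * (cocycle ψ R x s i : ℝ)) : ℝ)) *
    f (R.rep (x * s))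

/-- The Gaussian density `ξ_A(w)` associated with a (positive-definite) matrix `A`. -/
def gauss {d : ℕ} (A : Matrix (Fin d) (Fin d) ℝ) (w : Fin d → ℝ) : ℝ :=
  (2 * Real.pi) ^ (-(d : ℝ) / 2) * A.det ^ (-(1 : ℝ) / 2) *
    Real.exp (-(w ⬝ᵥ A⁻¹.mulVec w) / 2)

/-- The product representative system for `Λ₁ × Λ₂ ≤ Γ₁ × Γ₂`. -/
def prodRep {Γ₁ : Type*} [Group Γ₁] {Γ₂ : Type*} [Group Γ₂]
    {Λ₁ : Subgroup Γ₁} {Λ₂ : Subgroup Γ₂}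
    (R₁ : RepSystem Λ₁) (R₂ : RepSystem Λ₂) : RepSystem (Λ₁.prod Λ₂) where
  Δ := R₁.Δ ×ˢ R₂.Δ
  one_mem := Finset.mem_product.mpr ⟨R₁.one_mem, R₂.one_mem⟩
  rep := fun p => (R₁.rep p.1, R₂.rep p.2)
  rep_mem := fun p => Finset.mem_product.mpr ⟨R₁.rep_mem p.1, R₂.rep_mem p.2⟩
  rep_spec := fun p => Subgroup.mem_prod.mpr ⟨R₁.rep_spec p.1, R₂.rep_spec p.2⟩
  rep_idem := fun x hx => by
    rcases Finset.mem_product.mp hx with ⟨h1, h2⟩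
    exact Prod.ext_iff.mpr ⟨R₁.rep_idem x.1 h1, R₂.rep_idem x.2 h2⟩
  rep_coset := fun p v hv => by
    rcases Subgroup.mem_prod.mp hv with ⟨h1, h2⟩
    exact Prod.ext_iff.mpr ⟨R₁.rep_coset p.1 v.1 h1, R₂.rep_coset p.2 v.2 h2⟩

/-- The 1-form `𝐯̂(x,s) = ⟨𝐯, α(x,s)⟩` on a product, standard inner product. -/
def vhat2 {Γ₁ : Type*} [Group Γ₁] {Γ₂ : Type*} [Group Γ₂]
    {Λ₁ : Subgroup Γ₁} {Λ₂ : Subgroup Γ₂} {m₁ m₂ : ℕ}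
    (ψ₁ : Λ₁ ≃* Multiplicative (Fin m₁ → ℤ)) (R₁ : RepSystem Λ₁)
    (ψ₂ : Λ₂ ≃* Multiplicative (Fin m₂ → ℤ)) (R₂ : RepSystem Λ₂)
    (v : (Fin m₁ → ℝ) × (Fin m₂ → ℝ)) : (Γ₁ × Γ₂) → (Γ₁ × Γ₂) → ℝ :=
  fun x s => (∑ i, v.1 i * (cocycle ψ₁ R₁ x.1 s.1 i : ℝ)) +
    ∑ i, v.2 i * (cocycle ψ₂ R₂ x.2 s.2 i : ℝ)

/-- The 1-form `𝐯̂(x,s) = ⟨𝐯, α(x,s)⟩` on a product, orthogonal-sum of the two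
bilinear forms `B₁`, `B₂`. -/
def vhatB2 {Γ₁ : Type*} [Group Γ₁] {Γ₂ : Type*} [Group Γ₂]
    {Λ₁ : Subgroup Γ₁} {Λ₂ : Subgroup Γ₂} {m₁ m₂ : ℕ}
    (ψ₁ : Λ₁ ≃* Multiplicative (Fin m₁ → ℤ)) (R₁ : RepSystem Λ₁)
    (B₁ : (Fin m₁ → ℝ) →ₗ[ℝ] (Fin m₁ → ℝ) →ₗ[ℝ] ℝ)
    (ψ₂ : Λ₂ ≃* Multiplicative (Fin m₂ → ℤ)) (R₂ : RepSystem Λ₂)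
    (B₂ : (Fin m₂ → ℝ) →ₗ[ℝ] (Fin m₂ → ℝ) →ₗ[ℝ] ℝ)
    (v : (Fin m₁ → ℝ) × (Fin m₂ → ℝ)) : (Γ₁ × Γ₂) → (Γ₁ × Γ₂) → ℝ :=
  fun x s => B₁ v.1 (fun i => (cocycle ψ₁ R₁ x.1 s.1 i : ℝ)) +
    B₂ v.2 (fun i => (cocycle ψ₂ R₂ x.2 s.2 i : ℝ))

end

/-!
*Noise sensitivity kills homomorphisms.* Test both laws against the character
`(x, y) ↦ exp (iθ (φ x - φ y))` of `Γ × Γ`: its integrals are the `n`-th powers of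
`ρ |c|² + (1 - ρ)` and of `|c|²`, where `c = ∑ μ(γ) exp (iθ φ γ)`. If `φ ≠ 1`, then `|c|²` is a
continuous function of `θ` that equals `1` at `θ = 0` but is not constant, so `θ` can be chosen with
`|c|² = 1 - 1/n`, and the two powers tend to the distinct limits `e^(-ρ)` and `e^(-1)`.

*Absence of homomorphisms gives noise sensitivity.* A finite-index copy of `ℤ^ι` acts freely on `Γ`
by left multiplication with finitely many orbits. Summing over the orbits the displacement of the
lattice coordinates under right multiplication by `s` is the transfer, a homomorphism in `s`, hence
zero. So the mean drift vanishes, the Poisson equation on the orbits is solvable, and the lattice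
coordinates plus a periodic corrector form a martingale for the walk. On `Γ × Γ` the laws `π^ρ` and
`μ × μ` both drive such centered walks; the variances of their increments differ by a covariance
term, bilinear in the drifts of the two factors, which averages to zero over the orbits, again
because the transfer vanishes. Two centered walks with the same averaged variance are
asymptotically equal in total variation: Fourier inversion in the lattice coordinates, a
perturbation argument at frequencies of order `n^(-1/2)` and Gaussian domination of the others give
a local limit theorem, while Chebyshev's inequality for the martingale controls the tails.
-/

section Convolution

variable {α G E : Type*} [Group G] [NormedAddCommGroup E] [NormedSpace ℝ E]

lemma IsProb.nonneg {p : α → ℝ} (hp : IsProb p) (a : α) : 0 ≤ p a := hp.1 a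

lemma IsProb.summable {p : α → ℝ} (hp : IsProb p) : Summable p := hp.2.summable

lemma IsProb.le_one {p : α → ℝ} (hp : IsProb p) (a : α) : p a ≤ 1 :=
  le_hasSum hp.2 a fun b _ => hp.nonneg b

lemma IsProb.hasSum_smul_const {p : α → ℝ} (hp : IsProb p) (c : E) :
    HasSum (fun a => p a • c) c := by
  simpa only [one_smul] using hp.2.smul_const c

lemma IsProb.norm_smul_le {p : α → ℝ} (hp : IsProb p) {a : α} {x : E} {C : ℝ} (hx : ‖x‖ ≤ C) :
    ‖p a • x‖ ≤ p a * C := by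
  rw [norm_smul, Real.norm_of_nonneg (hp.nonneg a)]
  exact mul_le_mul_of_nonneg_left hx (hp.nonneg a)

lemma IsProb.summable_norm_smul {p : α → ℝ} (hp : IsProb p) {f : α → E} {C : ℝ}
    (hf : ∀ a, ‖f a‖ ≤ C) : Summable fun a => ‖p a • f a‖ :=
  .of_nonneg_of_le (fun _ => norm_nonneg _) (fun a => hp.norm_smul_le (hf a))
    (hp.summable.mul_right C)

lemma IsProb.summable_smul [CompleteSpace E] {p : α → ℝ} (hp : IsProb p) {f : α → E} {C : ℝ}
    (hf : ∀ a, ‖f a‖ ≤ C) : Summable fun a => p a • f a :=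
  (hp.summable_norm_smul hf).of_norm

lemma IsProb.norm_tsum_smul_le {p : α → ℝ} (hp : IsProb p) {f : α → E} {C : ℝ}
    (hf : ∀ a, ‖f a‖ ≤ C) : ‖∑' a, p a • f a‖ ≤ C :=
  tsum_of_norm_bounded (hp.hasSum_smul_const C) fun a => hp.norm_smul_le (hf a)

lemma IsProb.norm_tsum_smul_sub_le [CompleteSpace E] {p : α → ℝ} (hp : IsProb p) {f : α → E}
    {C ε : ℝ} (hf : ∀ a, ‖f a‖ ≤ C) (T : Finset α) (hT : ∀ a ∈ T, ε ≤ p a) :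
    ‖∑' a, p a • f a - ε • ∑ a ∈ T, f a‖ ≤ (1 - T.card * ε) * C := by
  let e : α → ℝ := (T : Set α).indicator fun _ => ε
  have he : HasSum e (T.card * ε) := by
    simpa using hasSum_subtype_iff_indicator.1 (T.hasSum fun _ => ε)
  have hef : HasSum (fun a => e a • f a) (ε • ∑ a ∈ T, f a) := by
    have hind := hasSum_subtype_iff_indicator.1 (T.hasSum fun a => ε • f a)
    simpa only [Set.indicator_smul_left, Finset.smul_sum] using hind
  have hle : ∀ a, e a ≤ p a := fun a => Set.indicator_le' (fun a ha => hT a ha)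
    (fun a _ => hp.nonneg a) a
  rw [← hef.tsum_eq, ← (hp.summable_smul hf).tsum_sub hef.summable]
  refine tsum_of_norm_bounded ((hp.2.sub he).mul_right C) fun a => ?_
  rw [← sub_smul, norm_smul, Real.norm_of_nonneg (sub_nonneg.2 (hle a))]
  exact mul_le_mul_of_nonneg_left (hf a) (sub_nonneg.2 (hle a))

lemma IsProb.norm_tsum_smul_le_of_ne [CompleteSpace E] {p : α → ℝ} (hp : IsProb p) {f : α → E}
    {C ε : ℝ} (hf : ∀ a, ‖f a‖ ≤ C) {a b : α} (hab : a ≠ b) (hε : 0 ≤ ε) (ha : ε ≤ p a)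
    (hb : ε ≤ p b) : ‖∑' s, p s • f s‖ ≤ ε * ‖f a + f b‖ + (1 - 2 * ε) * C := by
  have hsub := hp.norm_tsum_smul_sub_le hf {a, b} (ε := ε) (by simp [ha, hb])
  rw [Finset.sum_pair hab, Finset.card_pair hab, Nat.cast_ofNat] at hsub
  have htri := norm_le_norm_add_norm_sub' (∑' s, p s • f s) (ε • (f a + f b))
  rw [norm_smul, Real.norm_of_nonneg hε] at htri
  linarith

/-- The Markov operator `f ↦ (γ ↦ ∑ₛ p(s) f(γ s))` of the right random walk with step law `p`. -/
noncomputable def markovOp (p : G → ℝ) (f : G → E) : G → E := fun γ => ∑' s, p s • f (γ * s)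

lemma norm_markovOp_le {p : G → ℝ} (hp : IsProb p) {f : G → E} {C : ℝ} (hf : ∀ g, ‖f g‖ ≤ C)
    (γ : G) : ‖markovOp p f γ‖ ≤ C :=
  hp.norm_tsum_smul_le fun s => hf (γ * s)

lemma markovOp_add [CompleteSpace E] {p : G → ℝ} (hp : IsProb p) {f g : G → E} {C D : ℝ}
    (hf : ∀ x, ‖f x‖ ≤ C) (hg : ∀ x, ‖g x‖ ≤ D) :
    markovOp p (f + g) = markovOp p f + markovOp p g := by
  funext γ
  simpa only [markovOp, Pi.add_apply, smul_add] using
    (hp.summable_smul fun s => hf (γ * s)).tsum_add (hp.summable_smul fun s => hg (γ * s))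

lemma markovOp_smul {𝕜 : Type*} [DivisionRing 𝕜] [Module 𝕜 E] [ContinuousConstSMul 𝕜 E]
    [SMulCommClass ℝ 𝕜 E] (p : G → ℝ) (c : 𝕜) (f : G → E) :
    markovOp p (c • f) = c • markovOp p f := by
  funext γ
  simp only [markovOp, Pi.smul_apply, smul_comm _ c, tsum_const_smul'']

lemma markovOp_sub [CompleteSpace E] {p : G → ℝ} (hp : IsProb p) {f g : G → E} {C D : ℝ}
    (hf : ∀ x, ‖f x‖ ≤ C) (hg : ∀ x, ‖g x‖ ≤ D) :
    markovOp p (f - g) = markovOp p f - markovOp p g := by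
  funext γ
  simpa only [markovOp, Pi.sub_apply, smul_sub] using
    (hp.summable_smul fun s => hf (γ * s)).tsum_sub (hp.summable_smul fun s => hg (γ * s))

lemma summable_mul_inv_mul {p q : G → ℝ} (hp : IsProb p) (hq : IsProb q) (g : G) :
    Summable fun h => p h * q (h⁻¹ * g) :=
  .of_nonneg_of_le (fun h => mul_nonneg (hp.nonneg h) (hq.nonneg _))
    (fun h => mul_le_of_le_one_right (hp.nonneg h) (hq.le_one _)) hp.summable

lemma hasSum_conv_smul {p q : G → ℝ} (hp : IsProb p) (hq : IsProb q) {f : G → E}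
    (hf : Summable fun x : G × G => (p x.1 * q x.2) • f (x.1 * x.2)) :
    HasSum (fun g => conv p q g • f g) (∑' x : G × G, (p x.1 * q x.2) • f (x.1 * x.2)) := by
  let e : G × G ≃ G × G := ((Equiv.refl G).prodShear Equiv.mulLeft).trans (Equiv.prodComm G G)
  have hshear : HasSum (fun x : G × G => (p x.2 * q (x.2⁻¹ * x.1)) • f x.1)
      (∑' x : G × G, (p x.1 * q x.2) • f (x.1 * x.2)) := by
    rw [← e.hasSum_iff]
    simpa [e, Function.comp_def] using hf.hasSum
  exact hshear.prod_fiberwise fun g => (summable_mul_inv_mul hp hq g).hasSum.smul_const (f g)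

lemma hasSum_conv_smul_markovOp [CompleteSpace E] {p q : G → ℝ} (hp : IsProb p) (hq : IsProb q)
    {f : G → E} (hf : Summable fun x : G × G => (p x.1 * q x.2) • f (x.1 * x.2)) :
    HasSum (fun g => conv p q g • f g) (∑' h, p h • ∑' s, q s • f (h * s)) := by
  convert! hasSum_conv_smul hp hq hf using 1
  rw [hf.tsum_prod]
  exact tsum_congr fun h => by simp only [mul_smul, tsum_const_smul'']

lemma markovOp_conv [CompleteSpace E] {p q : G → ℝ} (hp : IsProb p) (hq : IsProb q) {f : G → E}
    {C : ℝ} (hf : ∀ g, ‖f g‖ ≤ C) : markovOp (conv p q) f = markovOp p (markovOp q f) := by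
  funext γ
  have hsum : Summable fun x : G × G => (p x.1 * q x.2) • f (γ * (x.1 * x.2)) := by
    refine ((hp.summable.mul_of_nonneg hq.summable hp.1 hq.1).mul_right C).of_norm_bounded
      fun x => ?_
    have hpq := mul_nonneg (hp.nonneg x.1) (hq.nonneg x.2)
    rw [norm_smul, Real.norm_of_nonneg hpq]
    exact mul_le_mul_of_nonneg_left (hf _) hpq
  simpa only [markovOp, mul_assoc] using
    (hasSum_conv_smul_markovOp hp hq (f := fun g => f (γ * g)) hsum).tsum_eq

lemma IsProb.conv {p q : G → ℝ} (hp : IsProb p) (hq : IsProb q) : IsProb (NSVA.conv p q) := by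
  refine ⟨fun g => tsum_nonneg fun h => mul_nonneg (hp.nonneg _) (hq.nonneg _), ?_⟩
  have h := hasSum_conv_smul_markovOp hp hq (f := fun _ => (1 : ℝ))
    (by simpa using hp.summable.mul_of_nonneg hq.summable hp.1 hq.1)
  rw [(hq.hasSum_smul_const 1).tsum_eq, (hp.hasSum_smul_const 1).tsum_eq] at h
  simpa only [smul_eq_mul, mul_one] using h

lemma IsProb.convPow {p : G → ℝ} (hp : IsProb p) : ∀ n, IsProb (convPow p n)
  | 0 => ⟨fun g => by dsimp only [NSVA.convPow]; split_ifs <;> norm_num,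
      by simpa [NSVA.convPow] using hasSum_ite_eq (1 : G) (1 : ℝ)⟩
  | n + 1 => (hp.convPow n).conv hp

lemma markovOp_convPow_zero (p : G → ℝ) (f : G → E) : markovOp (convPow p 0) f = f := by
  funext γ
  simp [markovOp, convPow]

lemma markovOp_convPow_succ [CompleteSpace E] {p : G → ℝ} (hp : IsProb p) (n : ℕ) {f : G → E}
    {C : ℝ} (hf : ∀ g, ‖f g‖ ≤ C) :
    markovOp (convPow p (n + 1)) f = markovOp (convPow p n) (markovOp p f) :=
  markovOp_conv (hp.convPow n) hp hf

lemma markovOp_convPow_add [CompleteSpace E] {p : G → ℝ} (hp : IsProb p) (m n : ℕ) {f : G → E}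
    {C : ℝ} (hf : ∀ g, ‖f g‖ ≤ C) :
    markovOp (convPow p (m + n)) f = markovOp (convPow p m) (markovOp (convPow p n) f) := by
  induction n generalizing f with
  | zero => rw [markovOp_convPow_zero, add_zero]
  | succ n ih =>
    rw [← add_assoc, markovOp_convPow_succ hp _ hf, markovOp_convPow_succ hp _ hf,
      ih (norm_markovOp_le hp hf)]

lemma markovOp_convPow_of_eigen [CompleteSpace E] {𝕜 : Type*} [NormedField 𝕜] [NormedSpace 𝕜 E]
    [SMulCommClass ℝ 𝕜 E] {p : G → ℝ} (hp : IsProb p) {f : G → E} {C : ℝ} (hf : ∀ g, ‖f g‖ ≤ C)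
    {c : 𝕜} (hc : markovOp p f = c • f) (n : ℕ) : markovOp (convPow p n) f = c ^ n • f := by
  induction n with
  | zero => rw [markovOp_convPow_zero, pow_zero, one_smul]
  | succ n ih => rw [markovOp_convPow_succ hp n hf, hc, markovOp_smul, ih, smul_smul, pow_succ']

lemma norm_markovOp_convPow_sub_pow_smul_le [CompleteSpace E] {𝕜 : Type*} [NormedField 𝕜]
    [NormedSpace 𝕜 E] [SMulCommClass ℝ 𝕜 E] {p : G → ℝ} (hp : IsProb p) {f : G → E} {C : ℝ}
    (hf : ∀ g, ‖f g‖ ≤ C) {c : 𝕜} (hc : ‖c‖ ≤ 1) {η : ℝ}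
    (h : ∀ γ, ‖markovOp p f γ - c • f γ‖ ≤ η) (n : ℕ) (γ : G) :
    ‖markovOp (convPow p n) f γ - c ^ n • f γ‖ ≤ n * η := by
  have hcf : ∀ g, ‖(c • f) g‖ ≤ C := fun g => by
    rw [Pi.smul_apply, norm_smul]
    exact (mul_le_of_le_one_left (norm_nonneg _) hc).trans (hf g)
  induction n with
  | zero => simp [markovOp_convPow_zero]
  | succ n ih =>
    have hstep :
        ‖(markovOp (convPow p n) (markovOp p f) - c • markovOp (convPow p n) f) γ‖ ≤ η := by
      rw [← markovOp_smul, ← markovOp_sub (hp.convPow n) (norm_markovOp_le hp hf) hcf]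
      exact norm_markovOp_le (hp.convPow n) h γ
    have hih : ‖c • (markovOp (convPow p n) f γ - c ^ n • f γ)‖ ≤ n * η := by
      rw [norm_smul]
      exact (mul_le_of_le_one_left (norm_nonneg _) hc).trans ih
    rw [markovOp_convPow_succ hp n hf]
    calc _ = ‖(markovOp (convPow p n) (markovOp p f) - c • markovOp (convPow p n) f) γ
          + c • (markovOp (convPow p n) f γ - c ^ n • f γ)‖ := by
          rw [smul_sub, smul_smul, ← pow_succ', Pi.sub_apply, Pi.smul_apply, sub_add_sub_cancel]
      _ ≤ η + n * η := (norm_add_le _ _).trans (add_le_add hstep hih)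
      _ = (n + 1 : ℕ) * η := by push_cast; ring

lemma norm_markovOp_convPow_mul_le [CompleteSpace E] {p : G → ℝ} (hp : IsProb p) {k : ℕ} {δ : ℝ}
    {S : Set (G → E)} (hS : ∀ f ∈ S, markovOp (convPow p k) f ∈ S)
    (hδ : ∀ f ∈ S, ∀ C, (∀ γ, ‖f γ‖ ≤ C) → ∀ γ, ‖markovOp (convPow p k) f γ‖ ≤ δ * C)
    {f : G → E} (hf : f ∈ S) {C : ℝ} (hC : ∀ γ, ‖f γ‖ ≤ C) (m : ℕ) (γ : G) :
    ‖markovOp (convPow p (k * m)) f γ‖ ≤ δ ^ m * C := by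
  induction m generalizing f C with
  | zero => simpa [markovOp_convPow_zero] using hC γ
  | succ m ih =>
    rw [mul_add, mul_one, markovOp_convPow_add hp _ _ hC, pow_succ, mul_assoc]
    exact ih (hS f hf) (hδ f hf C hC)

lemma hasSum_conv_mul_of_nonneg {p q f : G → ℝ} (hp : IsProb p) (hq : IsProb q)
    (hf : ∀ g, 0 ≤ f g) (hqf : ∀ γ, Summable fun s => q s * f (γ * s))
    (hpqf : Summable fun h => p h * markovOp q f h) :
    HasSum (fun g => conv p q g * f g) (∑' h, p h * markovOp q f h) := by
  refine hasSum_conv_smul_markovOp hp hq ((summable_prod_of_nonneg fun x =>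
    mul_nonneg (mul_nonneg (hp.nonneg _) (hq.nonneg _)) (hf _)).2 ⟨fun h => ?_, ?_⟩)
  · simpa only [smul_eq_mul, mul_assoc] using (hqf h).mul_left (p h)
  · simpa only [smul_eq_mul, mul_assoc, tsum_mul_left, markovOp] using hpqf

lemma tsum_convPow_mul_le_of_markovOp_le {p f : G → ℝ} (hp : IsProb p) (hf : ∀ g, 0 ≤ f g) {C : ℝ}
    (hpf : ∀ γ, Summable fun s => p s * f (γ * s)) (hle : ∀ γ, markovOp p f γ ≤ f γ + C) (n : ℕ) :
    Summable (fun g => convPow p n g * f g) ∧ ∑' g, convPow p n g * f g ≤ f 1 + n * C := by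
  induction n with
  | zero =>
    have hδ : (fun g => convPow p 0 g * f g) = fun g => if g = 1 then f 1 else 0 := by
      funext g
      by_cases h : g = 1 <;> simp [convPow, h]
    rw [hδ]
    exact ⟨(hasSum_ite_eq 1 (f 1)).summable, by simp⟩
  | succ n ih =>
    have hpn := hp.convPow n
    have hbound : HasSum (fun h => convPow p n h * (f h + C))
        ((∑' g, convPow p n g * f g) + C) := by
      simpa only [mul_add, smul_eq_mul] using ih.1.hasSum.add (hpn.hasSum_smul_const C)
    have hstep : ∀ h, convPow p n h * markovOp p f h ≤ convPow p n h * (f h + C) :=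
      fun h => mul_le_mul_of_nonneg_left (hle h) (hpn.nonneg h)
    have hsum : Summable fun h => convPow p n h * markovOp p f h :=
      .of_nonneg_of_le (fun h => mul_nonneg (hpn.nonneg h)
        (tsum_nonneg fun s => mul_nonneg (hp.nonneg s) (hf _))) hstep hbound.summable
    have hconv := hasSum_conv_mul_of_nonneg hpn hp hf hpf hsum
    refine ⟨hconv.summable, ?_⟩
    calc ∑' g, convPow p (n + 1) g * f g = ∑' h, convPow p n h * markovOp p f h := hconv.tsum_eq
      _ ≤ (∑' g, convPow p n g * f g) + C := hasSum_le hstep hsum.hasSum hbound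
      _ ≤ f 1 + (n + 1 : ℕ) * C := by push_cast; linarith [ih.2]

/-- Every group element is eventually charged by the convolution powers of `p`; this is the
combined effect of aperiodicity and nondegeneracy. -/
def EventuallyPos (p : G → ℝ) : Prop := ∀ g, ∀ᶠ n in atTop, 0 < convPow p n g

lemma conv_mul_pos {p q : G → ℝ} (hp : IsProb p) (hq : IsProb q) {a b : G} (ha : 0 < p a)
    (hb : 0 < q b) : 0 < conv p q (a * b) :=
  (summable_mul_inv_mul hp hq (a * b)).tsum_pos
    (fun h => mul_nonneg (hp.nonneg _) (hq.nonneg _)) a (by simp [*])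

lemma exists_pos_of_conv_pos {p q : G → ℝ} (hp : IsProb p) {g : G}
    (h : 0 < conv p q g) : ∃ a, 0 < p a ∧ 0 < q (a⁻¹ * g) := by
  contrapose! h
  refine tsum_nonpos fun a => ?_
  rcases (hp.nonneg a).eq_or_lt with ha | ha
  · rw [← ha, zero_mul]
  · exact mul_nonpos_of_nonneg_of_nonpos ha.le (h a ha)

lemma exists_forall_convPow_mul_pos {p : G → ℝ} (hp : IsProb p) (hnd : Nondeg p) (g : G) :
    ∃ k, ∀ n a, 0 < convPow p n a → 0 < convPow p (n + k) (a * g) := by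
  induction hnd g using Subsemigroup.closure_induction with
  | mem x hx => exact ⟨1, fun n a ha => conv_mul_pos (hp.convPow n) hp ha hx⟩
  | mul x y _ _ hx hy =>
    obtain ⟨k, hk⟩ := hx
    obtain ⟨l, hl⟩ := hy
    refine ⟨k + l, fun n a ha => ?_⟩
    rw [← add_assoc, ← mul_assoc]
    exact hl _ _ (hk _ _ ha)

lemma eventuallyPos_of_aperiodic_of_nondeg {p : G → ℝ} (hp : IsProb p) (hap : Aperiodic p)
    (hnd : Nondeg p) : EventuallyPos p := by
  intro g
  obtain ⟨k, hk⟩ := exists_forall_convPow_mul_pos hp hnd g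
  obtain ⟨N, hN⟩ := hap
  filter_upwards [eventually_ge_atTop (N + k)] with n hn
  have hpos := hk (n - k) 1 (hN _ (by lia))
  rwa [one_mul, Nat.sub_add_cancel (by lia)] at hpos

end Convolution

section Noise

variable {G E : Type*} [NormedAddCommGroup E] [NormedSpace ℝ E]

lemma hasSum_noised_smul {μ : G → ℝ} (ρ : ℝ) {F : G × G → E} {A B : E}
    (hA : HasSum (fun x : G × G => (μ x.1 * μ x.2) • F x) A)
    (hB : HasSum (fun s => μ s • F (s, s)) B) :
    HasSum (fun x => noised μ ρ x • F x) (ρ • A + (1 - ρ) • B) := by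
  have hdiag : HasSum (fun x : G × G => (μ x.1 * (if x.1 = x.2 then 1 else 0)) • F x) B := by
    refine (Function.Injective.hasSum_iff (g := fun s : G => (s, s))
      (fun a b h => congrArg Prod.fst h) ?_).1 (by simpa [Function.comp_def] using hB)
    rintro ⟨a, b⟩ hab
    have hne : a ≠ b := fun h => hab ⟨a, by simp [h]⟩
    simp [hne]
  convert! (hA.const_smul ρ).add (hdiag.const_smul (1 - ρ)) using 2 with x
  simp only [noised, add_smul, mul_smul]

lemma noised_one (μ : G → ℝ) : noised μ 1 = fun x => μ x.1 * μ x.2 := by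
  funext x
  simp [noised]

lemma IsProb.hasSum_prod {α β : Type*} {μ : α → ℝ} {ν : β → ℝ} (hμ : IsProb μ) (hν : IsProb ν) :
    HasSum (fun x : α × β => μ x.1 * ν x.2) 1 := by
  simpa using hμ.2.mul hν.2 (hμ.summable.mul_of_nonneg hν.summable hμ.1 hν.1)

lemma mul_mul_le_noised {μ : G → ℝ} (hμ : IsProb μ) {ρ : ℝ} (hρ : ρ ≤ 1) (x : G × G) :
    ρ * (μ x.1 * μ x.2) ≤ noised μ ρ x := by
  rw [noised, mul_assoc]
  exact le_add_of_nonneg_right (mul_nonneg (mul_nonneg (sub_nonneg.2 hρ) (hμ.nonneg _))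
    (by split_ifs <;> norm_num))

lemma IsProb.noised {μ : G → ℝ} (hμ : IsProb μ) {ρ : ℝ} (h0 : 0 ≤ ρ) (h1 : ρ ≤ 1) :
    IsProb (noised μ ρ) := by
  refine ⟨fun x => (mul_mul_le_noised hμ h1 x).trans' (mul_nonneg h0
    (mul_nonneg (hμ.nonneg _) (hμ.nonneg _))), ?_⟩
  have hsum := hasSum_noised_smul ρ (F := fun _ => (1 : ℝ)) (by simpa using hμ.hasSum_prod hμ)
    (by simpa using hμ.2)
  simpa only [smul_eq_mul, mul_one, add_sub_cancel] using hsum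

variable [Group G]

lemma convPow_noised_one {μ : G → ℝ} (hμ : IsProb μ) (n : ℕ) :
    convPow (noised μ 1) n = fun x : G × G => convPow μ n x.1 * convPow μ n x.2 := by
  induction n with
  | zero =>
    funext ⟨a, b⟩
    by_cases ha : a = 1 <;> by_cases hb : b = 1 <;> simp [convPow, ha, hb]
  | succ n ih =>
    funext x
    have hnonneg : ∀ g h, 0 ≤ convPow μ n h * μ (h⁻¹ * g) := fun g h =>
      mul_nonneg ((hμ.convPow n).nonneg _) (hμ.nonneg _)
    have hsum := summable_mul_inv_mul (hμ.convPow n) hμ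
    have hprod := (hsum x.1).tsum_mul_tsum (hsum x.2)
      ((hsum x.1).mul_of_nonneg (hsum x.2) (hnonneg _) (hnonneg _))
    simp only [convPow, conv] at hprod ⊢
    rw [hprod, ih, noised_one]
    exact tsum_congr fun y => mul_mul_mul_comm _ _ _ _

lemma convPow_noised_pos {μ : G → ℝ} (hμ : IsProb μ) {ρ : ℝ} (h0 : 0 < ρ) (h1 : ρ ≤ 1) (n : ℕ)
    {a b : G} (ha : 0 < convPow μ n a) (hb : 0 < convPow μ n b) :
    0 < convPow (noised μ ρ) n (a, b) := by
  have hν := hμ.noised h0.le h1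
  induction n generalizing a b with
  | zero =>
    have eq_one : ∀ {g : G}, 0 < convPow μ 0 g → g = 1 := fun {g} hg => by
      by_contra h
      simp [convPow, h] at hg
    simp [convPow, eq_one ha, eq_one hb]
  | succ n ih =>
    obtain ⟨c, hc, hca⟩ := exists_pos_of_conv_pos (hμ.convPow n) ha
    obtain ⟨d, hd, hdb⟩ := exists_pos_of_conv_pos (hμ.convPow n) hb
    have hstep : 0 < noised μ ρ (c⁻¹ * a, d⁻¹ * b) :=
      (mul_pos h0 (mul_pos hca hdb)).trans_le (mul_mul_le_noised hμ h1 (_, _))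
    simpa [convPow] using conv_mul_pos (hν.convPow n) hν (ih hc hd) hstep

lemma EventuallyPos.noised {μ : G → ℝ} (hμ : IsProb μ) {ρ : ℝ} (h0 : 0 < ρ) (h1 : ρ ≤ 1)
    (hpos : EventuallyPos μ) : EventuallyPos (noised μ ρ) := fun x => by
  filter_upwards [hpos x.1, hpos x.2] with n ha hb
  exact convPow_noised_pos hμ h0 h1 n ha hb

end Noise

section Character

variable {G : Type*} [Group G]

/-- The Fourier transform of `p` at the unitary character `χ`. -/
noncomputable def charSum (p : G → ℝ) (χ : G →* Circle) : ℂ := ∑' g, p g • (χ g : ℂ)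

lemma charSum_convPow {p : G → ℝ} (hp : IsProb p) (χ : G →* Circle) (n : ℕ) :
    charSum (convPow p n) χ = charSum p χ ^ n := by
  have heigen : markovOp p (fun g => (χ g : ℂ)) = charSum p χ • fun g => (χ g : ℂ) := by
    funext γ
    simp only [markovOp, charSum, map_mul, Circle.coe_mul, Pi.smul_apply, smul_eq_mul,
      ← mul_smul_comm, tsum_mul_left, mul_comm]
  simpa [markovOp, charSum] using congrFun (markovOp_convPow_of_eigen hp (C := 1)
    (fun g => (Circle.norm_coe _).le) heigen n) 1

lemma charSum_one {p : G → ℝ} (hp : IsProb p) : charSum p 1 = 1 := by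
  simpa only [charSum, MonoidHom.one_apply, Circle.coe_one] using
    (hp.hasSum_smul_const (1 : ℂ)).tsum_eq

lemma charSum_inv (p : G → ℝ) (χ : G →* Circle) :
    charSum p χ⁻¹ = starRingEnd ℂ (charSum p χ) := by
  simp [charSum, Complex.conj_tsum, ← Circle.coe_inv_eq_conj]

lemma charSum_noised {μ : G → ℝ} (hμ : IsProb μ) (ρ : ℝ) (χ : G →* Circle) :
    charSum (noised μ ρ) (χ.coprod χ⁻¹) =
      ((ρ * Complex.normSq (charSum μ χ) + (1 - ρ) : ℝ) : ℂ) := by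
  have hsum : ∀ χ : G →* Circle, Summable fun s => ‖μ s • (χ s : ℂ)‖ := fun χ =>
    hμ.summable_norm_smul fun g => (Circle.norm_coe _).le
  have hprod : HasSum (fun x : G × G => (μ x.1 * μ x.2) • (χ.coprod χ⁻¹ x : ℂ))
      (Complex.normSq (charSum μ χ) : ℂ) := by
    rw [← Complex.mul_conj, ← charSum_inv, charSum, charSum,
      tsum_mul_tsum_of_summable_norm (hsum χ) (hsum χ⁻¹)]
    simpa only [MonoidHom.coprod_apply, Circle.coe_mul, smul_mul_smul_comm] using
      (summable_mul_of_summable_norm (hsum χ) (hsum χ⁻¹)).hasSum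
  have hdiag : HasSum (fun s => μ s • (χ.coprod χ⁻¹ (s, s) : ℂ)) 1 := by
    simpa using hμ.hasSum_smul_const (1 : ℂ)
  simpa [charSum] using (hasSum_noised_smul ρ hprod hdiag).tsum_eq

lemma normSq_charSum_lt_one {μ : G → ℝ} (hμ : IsProb μ) (hpos : EventuallyPos μ)
    {χ : G →* Circle} (hχ : χ ≠ 1) : Complex.normSq (charSum μ χ) < 1 := by
  obtain ⟨γ, hγ⟩ : ∃ γ, χ γ ≠ 1 := by
    by_contra! h
    exact hχ (MonoidHom.ext h)
  obtain ⟨n, hnγ, hn1⟩ := ((hpos γ).and (hpos 1)).exists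
  let ε := min (convPow μ n γ) (convPow μ n 1)
  have hε : 0 < ε := lt_min hnγ hn1
  have hγ1 : γ ≠ 1 := fun h => hγ (h ▸ map_one χ)
  have hle := (hμ.convPow n).norm_tsum_smul_le_of_ne (f := fun g => (χ g : ℂ)) (C := 1)
    (fun g => (Circle.norm_coe _).le) hγ1 hε.le (min_le_left _ _) (min_le_right _ _)
  have hlt : ‖(χ γ : ℂ) + χ 1‖ < 2 := by
    have hmid := norm_combo_lt_of_ne (E := ℂ) (Circle.norm_coe (χ γ)).le
      (Circle.norm_coe (χ 1)).le (by simpa [Circle.coe_eq_one] using hγ)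
      (one_half_pos (α := ℝ)) one_half_pos (add_halves 1)
    rw [← smul_add, norm_smul, Real.norm_of_nonneg one_half_pos.le] at hmid
    linarith
  have hpow : ‖charSum μ χ‖ ^ n < 1 := by
    rw [← norm_pow, ← charSum_convPow hμ]
    exact hle.trans_lt (by nlinarith)
  have hnorm : ‖charSum μ χ‖ < 1 := lt_of_not_ge fun h => (one_le_pow₀ h).not_gt hpow
  rw [Complex.normSq_eq_norm_sq]
  exact pow_lt_one₀ (norm_nonneg _) hnorm two_ne_zero

lemma norm_charSum_sub_le_tv {p q : G → ℝ} (hp : IsProb p) (hq : IsProb q) (χ : G →* Circle) :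
    ‖charSum p χ - charSum q χ‖ ≤ 2 * tv p q := by
  have hχ : ∀ g, ‖(χ g : ℂ)‖ ≤ 1 := fun g => (Circle.norm_coe _).le
  rw [charSum, charSum, ← (hp.summable_smul hχ).tsum_sub (hq.summable_smul hχ), tv, one_div,
    mul_inv_cancel_left₀ two_ne_zero]
  refine tsum_of_norm_bounded (hp.summable.sub hq.summable).abs.hasSum fun g => ?_
  rw [← sub_smul, norm_smul, Real.norm_eq_abs]
  exact mul_le_of_le_one_right (abs_nonneg _) (hχ g)

lemma abs_pow_sub_pow_le_tv_noised {μ : G → ℝ} (hμ : IsProb μ) {ρ : ℝ} (h0 : 0 ≤ ρ) (h1 : ρ ≤ 1)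
    (χ : G →* Circle) (n : ℕ) :
    |(ρ * Complex.normSq (charSum μ χ) + (1 - ρ)) ^ n - Complex.normSq (charSum μ χ) ^ n| ≤
      2 * tv (convPow (noised μ ρ) n) (fun x : G × G => convPow μ n x.1 * convPow μ n x.2) := by
  have hν : ∀ {ρ : ℝ}, 0 ≤ ρ → ρ ≤ 1 → IsProb (convPow (noised μ ρ) n) :=
    fun h0 h1 => (hμ.noised h0 h1).convPow n
  have htv := norm_charSum_sub_le_tv (hν h0 h1) (hν zero_le_one le_rfl) (χ.coprod χ⁻¹)
  rw [charSum_convPow (hμ.noised h0 h1), charSum_convPow (hμ.noised zero_le_one le_rfl),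
    charSum_noised hμ, charSum_noised hμ, convPow_noised_one hμ, ← Complex.ofReal_pow,
    ← Complex.ofReal_pow, ← Complex.ofReal_sub, Complex.norm_real] at htv
  simpa using htv

/-- The character `g ↦ exp(i θ φ(g))`. -/
noncomputable def expChar (φ : G →* Multiplicative ℤ) (θ : ℝ) : G →* Circle :=
  (zpowersHom Circle (Circle.exp θ)).comp φ

lemma continuous_charSum_expChar {μ : G → ℝ} (hμ : IsProb μ) (φ : G →* Multiplicative ℤ) :
    Continuous fun θ => charSum μ (expChar φ θ) := by
  refine continuous_tsum (u := μ) (fun s => ?_) hμ.summable fun s θ => ?_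
  · simp only [expChar, MonoidHom.comp_apply, zpowersHom_apply]
    exact (continuous_subtype_val.comp (Circle.exp.continuous.zpow _)).const_smul (μ s)
  · simpa using hμ.norm_smul_le (x := (expChar φ θ s : ℂ)) (Circle.norm_coe _).le

lemma exists_expChar_ne_one {φ : G →* Multiplicative ℤ} (hφ : φ ≠ 1) : ∃ θ, expChar φ θ ≠ 1 := by
  obtain ⟨γ, hγ⟩ : ∃ γ, φ γ ≠ 1 := by
    by_contra! h
    exact hφ (MonoidHom.ext h)
  have hm : ((φ γ).toAdd : ℝ) ≠ 0 := by exact_mod_cast fun h => hγ (by simpa using h)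
  refine ⟨Real.pi / (φ γ).toAdd, fun h => ?_⟩
  have hexp := DFunLike.congr_fun h γ
  rw [expChar, MonoidHom.comp_apply, zpowersHom_apply, ← Circle.exp_zsmul, zsmul_eq_mul,
    mul_div_cancel₀ _ hm, MonoidHom.one_apply] at hexp
  norm_num [Circle.ext_iff] at hexp

lemma eq_one_of_tendsto_tv_noised {μ : G → ℝ} (hμ : IsProb μ) (hpos : EventuallyPos μ) {ρ : ℝ}
    (h0 : 0 ≤ ρ) (h1 : ρ < 1)
    (h : Tendsto (fun n => tv (convPow (noised μ ρ) n)
      (fun x : G × G => convPow μ n x.1 * convPow μ n x.2)) atTop (nhds 0))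
    (φ : G →* Multiplicative ℤ) : φ = 1 := by
  by_contra hφ
  obtain ⟨θ₀, hθ₀⟩ := exists_expChar_ne_one hφ
  have hcont := Complex.continuous_normSq.comp (continuous_charSum_expChar hμ φ)
  have hzero : Complex.normSq (charSum μ (expChar φ 0)) = 1 := by
    have hone : expChar φ 0 = 1 := by ext; simp [expChar]
    rw [hone, charSum_one hμ, map_one]
  have hone : Tendsto (fun n : ℕ => 1 + (-1) / (n : ℝ)) atTop (nhds 1) := by
    simpa using (tendsto_const_div_atTop_nhds_zero_nat (-1 : ℝ)).const_add 1
  have hev : ∀ᶠ n : ℕ in atTop, |(1 + (-ρ) / (n : ℝ)) ^ n - (1 + (-1) / (n : ℝ)) ^ n| ≤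
      2 * tv (convPow (noised μ ρ) n) (fun x : G × G => convPow μ n x.1 * convPow μ n x.2) := by
    filter_upwards [hone.eventually_const_lt (normSq_charSum_lt_one hμ hpos hθ₀)] with n hn
    have hle : 1 + (-1) / (n : ℝ) ≤ 1 := by
      simpa using div_nonpos_of_nonpos_of_nonneg (by norm_num : (-1 : ℝ) ≤ 0) n.cast_nonneg
    obtain ⟨θ, hθ⟩ := mem_range_of_exists_le_of_exists_ge hcont ⟨θ₀, hn.le⟩ ⟨0, hle.trans hzero.ge⟩
    convert! abs_pow_sub_pow_le_tv_noised hμ h0 h1.le (expChar φ θ) n using 4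
    · rw [Function.comp_apply] at hθ
      rw [hθ]
      ring
    · exact hθ.symm
  have hlim := ((Real.tendsto_one_add_div_pow_exp (-ρ)).sub
    (Real.tendsto_one_add_div_pow_exp (-1))).abs
  have hle := le_of_tendsto_of_tendsto hlim (h.const_mul 2) hev
  rw [mul_zero, abs_nonpos_iff, sub_eq_zero, Real.exp_eq_exp, neg_inj] at hle
  exact h1.ne hle

end Character

/-- A free left action of `ι → ℤ` on `G` by translations, with orbits indexed by `Δ`: `trans z` is
the element translating by `z`, and `coords γ` consists of the position of `γ` in its orbit and
the index of that orbit. -/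
structure LatticeCoords (G ι Δ : Type*) [Group G] where
  trans : (ι → ℤ) → G
  coords : G ≃ (ι → ℤ) × Δ
  coords_trans_mul : ∀ z γ, coords (trans z * γ) = (z + (coords γ).1, (coords γ).2)

namespace LatticeCoords

variable {G ι Δ : Type*} [Group G] (L : LatticeCoords G ι Δ)

lemma countable (L : LatticeCoords G ι Δ) [Finite ι] [Countable Δ] : Countable G :=
  L.coords.injective.countable

/-- The base point of an orbit. -/
def base (x : Δ) : G := L.coords.symm (0, x)

/-- The orbit of a point. -/
def orbit (γ : G) : Δ := (L.coords γ).2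

/-- The position of a point in its orbit, relative to the base point. -/
def pos (γ : G) : ι → ℤ := (L.coords γ).1

lemma orbit_trans_mul (z : ι → ℤ) (γ : G) : L.orbit (L.trans z * γ) = L.orbit γ := by
  simp [orbit, L.coords_trans_mul]

lemma pos_trans_mul (z : ι → ℤ) (γ : G) : L.pos (L.trans z * γ) = z + L.pos γ := by
  simp [pos, L.coords_trans_mul]

@[simp] lemma orbit_base (x : Δ) : L.orbit (L.base x) = x := by simp [orbit, base]

@[simp] lemma pos_base (x : Δ) : L.pos (L.base x) = 0 := by simp [pos, base]

lemma base_injective : Function.Injective L.base := Function.LeftInverse.injective L.orbit_base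

lemma trans_mul_base (z : ι → ℤ) (x : Δ) : L.trans z * L.base x = L.coords.symm (z, x) := by
  apply L.coords.injective
  simp [L.coords_trans_mul, base]

lemma trans_pos_mul_base_orbit (γ : G) : L.trans (L.pos γ) * L.base (L.orbit γ) = γ := by
  rw [trans_mul_base]
  simp [pos, orbit]

lemma orbit_base_orbit_mul (γ s : G) : L.orbit (L.base (L.orbit γ) * s) = L.orbit (γ * s) := by
  conv_rhs => rw [← L.trans_pos_mul_base_orbit γ, mul_assoc, orbit_trans_mul]

/-- The permutation of the orbits induced by right multiplication. -/
def orbitPerm (s : G) : Δ ≃ Δ where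
  toFun x := L.orbit (L.base x * s)
  invFun x := L.orbit (L.base x * s⁻¹)
  left_inv x := by simp [orbit_base_orbit_mul]
  right_inv x := by simp [orbit_base_orbit_mul]

/-- Invariance of a function under the left translations by `ι → ℤ`. -/
def IsPeriodic {α : Type*} (u : G → α) : Prop := ∀ z γ, u (L.trans z * γ) = u γ

variable {L}

lemma IsPeriodic.apply_base_orbit {α : Type*} {u : G → α} (hu : L.IsPeriodic u) (γ : G) :
    u (L.base (L.orbit γ)) = u γ := by
  conv_rhs => rw [← L.trans_pos_mul_base_orbit γ, hu]

lemma isPeriodic_comp_orbit {α : Type*} (h : Δ → α) : L.IsPeriodic fun γ => h (L.orbit γ) :=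
  fun z γ => congrArg h (L.orbit_trans_mul z γ)

lemma IsPeriodic.exists_norm_le [Finite Δ] {E : Type*} [NormedAddCommGroup E] {u : G → E}
    (hu : L.IsPeriodic u) : ∃ C, ∀ γ, ‖u γ‖ ≤ C := by
  obtain ⟨C, hC⟩ := (Set.finite_range fun x => ‖u (L.base x)‖).bddAbove
  exact ⟨C, fun γ => hu.apply_base_orbit γ ▸ hC ⟨L.orbit γ, rfl⟩⟩

variable {E : Type*} [NormedAddCommGroup E] [NormedSpace ℝ E]

lemma IsPeriodic.markovOp {u : G → E} (hu : L.IsPeriodic u) (p : G → ℝ) :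
    L.IsPeriodic (markovOp p u) := fun z γ => by
  simp only [NSVA.markovOp, mul_assoc, hu z]

variable [Fintype Δ]

lemma IsPeriodic.sum_base_mul {α : Type*} [AddCommMonoid α] {u : G → α} (hu : L.IsPeriodic u)
    (s : G) : ∑ x, u (L.base x * s) = ∑ x, u (L.base x) := by
  rw [← (L.orbitPerm s).sum_comp fun x => u (L.base x)]
  exact Finset.sum_congr rfl fun x _ => (hu.apply_base_orbit _).symm

lemma IsPeriodic.sum_markovOp_base [CompleteSpace E] {u : G → E} (hu : L.IsPeriodic u) {p : G → ℝ}
    (hp : IsProb p) : ∑ x, NSVA.markovOp p u (L.base x) = ∑ x, u (L.base x) := by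
  obtain ⟨C, hC⟩ := hu.exists_norm_le
  simp only [NSVA.markovOp]
  rw [← Summable.tsum_finsetSum fun x _ => hp.summable_smul fun s => hC (L.base x * s)]
  simp only [← Finset.smul_sum, hu.sum_base_mul]
  exact (hp.hasSum_smul_const _).tsum_eq

variable (L E) in
/-- The periodic functions whose mean over a fundamental domain vanishes. -/
def meanZero : Submodule ℝ (G → E) where
  carrier := {u | L.IsPeriodic u ∧ ∑ x, u (L.base x) = 0}
  add_mem' := fun hu hv => ⟨fun z γ => congrArg₂ (· + ·) (hu.1 z γ) (hv.1 z γ), by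
    simp [Finset.sum_add_distrib, hu.2, hv.2]⟩
  zero_mem' := ⟨fun _ _ => rfl, by simp⟩
  smul_mem' := fun c u hu => ⟨fun z γ => congrArg (c • ·) (hu.1 z γ), by
    simp [← Finset.smul_sum, hu.2]⟩

instance [FiniteDimensional ℝ E] : FiniteDimensional ℝ (L.meanZero E) :=
  .of_injective ((LinearMap.funLeft ℝ E L.base).comp (L.meanZero E).subtype) fun u v h => by
    ext γ
    rw [← u.2.1.apply_base_orbit, ← v.2.1.apply_base_orbit]
    exact congrFun h (L.orbit γ)

variable [CompleteSpace E] {p : G → ℝ}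

lemma markovOp_mem_meanZero (hp : IsProb p) {u : G → E} (hu : u ∈ L.meanZero E) :
    markovOp p u ∈ L.meanZero E :=
  ⟨hu.1.markovOp p, (hu.1.sum_markovOp_base hp).trans hu.2⟩

/-- Doeblin's contraction: the `k`-step law dominates `ε` times a transversal of the orbits, and
that part annihilates `u`. -/
lemma norm_markovOp_convPow_le_of_le (hp : IsProb p) {k : ℕ} {ε : ℝ}
    (hε : ∀ x y, ε ≤ convPow p k ((L.base x)⁻¹ * L.base y)) {u : G → E} (hu : u ∈ L.meanZero E)
    {C : ℝ} (hC : ∀ γ, ‖u γ‖ ≤ C) (γ : G) :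
    ‖markovOp (convPow p k) u γ‖ ≤ (1 - Fintype.card Δ * ε) * C := by
  rw [← (hu.1.markovOp _).apply_base_orbit γ]
  set x := L.orbit γ
  have hinj : Function.Injective fun y => (L.base x)⁻¹ * L.base y := fun y y' h =>
    L.base_injective (mul_left_cancel h)
  have hle := (hp.convPow k).norm_tsum_smul_sub_le (f := fun s => u (L.base x * s))
    (fun s => hC _) (Finset.univ.map ⟨_, hinj⟩) (ε := ε) (by simpa using hε x)
  simpa [hu.2, markovOp] using hle

lemma exists_contraction_meanZero (hp : IsProb p) (hpos : EventuallyPos p) :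
    ∃ k, ∃ δ : ℝ, 0 ≤ δ ∧ δ < 1 ∧ ∀ u ∈ L.meanZero E, ∀ C, (∀ γ, ‖u γ‖ ≤ C) →
      ∀ γ, ‖markovOp (convPow p k) u γ‖ ≤ δ * C := by
  have : Nonempty Δ := ⟨L.orbit 1⟩
  obtain ⟨k, hk⟩ := ((eventually_all (ι := Δ × Δ)).2 fun xy =>
    hpos ((L.base xy.1)⁻¹ * L.base xy.2)).exists
  obtain ⟨xy, hxy⟩ := Finite.exists_min fun xy : Δ × Δ =>
    convPow p k ((L.base xy.1)⁻¹ * L.base xy.2)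
  refine ⟨k, max 0 (1 - Fintype.card Δ * convPow p k ((L.base xy.1)⁻¹ * L.base xy.2)),
    le_max_left _ _, max_lt one_pos (sub_lt_self _ (mul_pos (by positivity) (hk xy))),
    fun u hu C hC γ => ?_⟩
  exact (norm_markovOp_convPow_le_of_le hp (fun x y => hxy (x, y)) hu hC γ).trans
    (mul_le_mul_of_nonneg_right (le_max_right _ _) ((norm_nonneg _).trans (hC γ)))

lemma exists_norm_markovOp_convPow_le (hp : IsProb p) (hpos : EventuallyPos p) {u : G → E}
    (hu : u ∈ L.meanZero E) {ε : ℝ} (hε : 0 < ε) :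
    ∃ j, ∀ γ, ‖markovOp (convPow p j) u γ‖ ≤ ε := by
  obtain ⟨k, δ, hδ0, hδ1, hk⟩ := exists_contraction_meanZero (L := L) (E := E) hp hpos
  obtain ⟨C, hC⟩ := hu.1.exists_norm_le
  have hlim : Tendsto (fun j => δ ^ j * C) atTop (nhds 0) := by
    simpa using (tendsto_pow_atTop_nhds_zero_of_lt_one hδ0 hδ1).mul_const C
  obtain ⟨j, hj⟩ := (hlim.eventually_lt_const hε).exists
  exact ⟨k * j, fun γ => (norm_markovOp_convPow_mul_le (S := L.meanZero E) hp
    (fun _ => markovOp_mem_meanZero (hp.convPow k)) hk hu hC j γ).trans hj.le⟩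

lemma eq_zero_of_mem_meanZero_of_markovOp_eq (hp : IsProb p) (hpos : EventuallyPos p) {u : G → E}
    (hu : u ∈ L.meanZero E) (hfix : markovOp p u = u) : u = 0 := by
  obtain ⟨C, hC⟩ := hu.1.exists_norm_le
  funext γ
  refine norm_le_zero_iff.1 (le_of_forall_pos_le_add fun ε hε => ?_)
  obtain ⟨j, hj⟩ := exists_norm_markovOp_convPow_le hp hpos hu hε
  simpa [markovOp_convPow_of_eigen hp hC (c := (1 : ℝ)) (by rw [hfix, one_smul]) j] using hj γ

/-- The Poisson equation `h - P h = b` on the finite quotient. -/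
lemma exists_sub_markovOp_eq [FiniteDimensional ℝ E] (hp : IsProb p) (hpos : EventuallyPos p)
    {b : G → E} (hb : b ∈ L.meanZero E) : ∃ h ∈ L.meanZero E, h - markovOp p h = b := by
  let T : L.meanZero E →ₗ[ℝ] L.meanZero E :=
    { toFun := fun u => ⟨u.1 - markovOp p u.1,
        (L.meanZero E).sub_mem u.2 (markovOp_mem_meanZero hp u.2)⟩
      map_add' := fun u v => Subtype.ext <| by
        obtain ⟨C, hC⟩ := u.2.1.exists_norm_le
        obtain ⟨D, hD⟩ := v.2.1.exists_norm_le
        simp only [Submodule.coe_add, markovOp_add hp hC hD, add_sub_add_comm]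
      map_smul' := fun c u => Subtype.ext <| by
        simp only [Submodule.coe_smul, markovOp_smul, smul_sub, RingHom.id_apply] }
  have hinj : Function.Injective T := LinearMap.ker_eq_bot'.2 (fun u hu => Subtype.ext <|
    eq_zero_of_mem_meanZero_of_markovOp_eq hp hpos u.2
      (sub_eq_zero.1 (congrArg Subtype.val hu)).symm) |> LinearMap.ker_eq_bot.1
  obtain ⟨h, hh⟩ := LinearMap.injective_iff_surjective.1 hinj ⟨b, hb⟩
  exact ⟨h, h.2, congrArg Subtype.val hh⟩

end LatticeCoords

section Taylor

lemma norm_exp_sub_one_sub_le (x : ℝ) :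
    ‖Complex.exp (x * Complex.I) - 1 - x * Complex.I‖ ≤ 3 * x ^ 2 := by
  have hx : ‖(x : ℂ) * Complex.I‖ = |x| := by simp
  rcases le_or_gt |x| 1 with h | h
  · have htaylor := Complex.norm_exp_sub_sum_le_norm_mul_exp ((x : ℂ) * Complex.I) 2
    simp only [Finset.sum_range_succ, Finset.sum_range_zero, hx, sq_abs] at htaylor
    calc _ = _ := by congr 1; simp [sub_sub]
      _ ≤ x ^ 2 * Real.exp |x| := htaylor
      _ ≤ x ^ 2 * 3 := mul_le_mul_of_nonneg_left ((Real.exp_le_exp.2 h).trans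
        (Real.exp_one_lt_d9.le.trans (by norm_num))) (sq_nonneg x)
      _ = 3 * x ^ 2 := mul_comm _ _
  · have htriangle : ‖Complex.exp (x * Complex.I) - 1 - x * Complex.I‖ ≤ 1 + 1 + |x| := by
      refine (norm_sub_le _ _).trans (add_le_add ((norm_sub_le _ _).trans ?_) hx.le)
      rw [Complex.norm_exp_ofReal_mul_I, norm_one]
    nlinarith [sq_abs x]

lemma tendsto_div_sqrt (x : ℝ) : Tendsto (fun n : ℕ => x / √n) atTop (nhds 0) :=
  (Real.tendsto_sqrt_atTop.comp tendsto_natCast_atTop_atTop).const_div_atTop x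

lemma natCast_mul_div_sqrt_sq (x : ℝ) {n : ℕ} (hn : 0 < n) : n * (x / √n) ^ 2 = x ^ 2 := by
  rw [div_pow, Real.sq_sqrt n.cast_nonneg, mul_div_cancel₀ _ (by positivity)]

lemma tendsto_mul_exp_sub_one_sub (x : ℝ) :
    Tendsto (fun n : ℕ => (n : ℂ) * (Complex.exp ((x / √n : ℝ) * Complex.I) - 1
      - (x / √n : ℝ) * Complex.I)) atTop (nhds (-(x ^ 2 / 2 : ℝ))) := by
  have harg : Tendsto (fun n : ℕ => ((x / √n : ℝ) : ℂ) * Complex.I) atTop (nhds 0) := by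
    simpa using (Complex.continuous_ofReal.tendsto 0 |>.comp (tendsto_div_sqrt x)).mul_const
      Complex.I
  have hsq : ∀ᶠ n : ℕ in atTop,
      (n : ℂ) * (((x / √n : ℝ) : ℂ) * Complex.I) ^ 2 = -((x ^ 2 : ℝ) : ℂ) := by
    filter_upwards [eventually_gt_atTop 0] with n hn
    rw [mul_pow, Complex.I_sq, ← natCast_mul_div_sqrt_sq x hn]
    push_cast
    ring
  have hlittle := (Asymptotics.isBigO_refl (fun n : ℕ => (n : ℂ)) atTop).mul_isLittleO
    ((Complex.exp_sub_sum_range_succ_isLittleO_pow 2).comp_tendsto harg)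
  have hzero := (Asymptotics.isLittleO_one_iff ℂ).1 (hlittle.trans_isBigO
    ((Asymptotics.isBigO_const_const _ one_ne_zero _).congr' (hsq.mono fun n h => h.symm) .rfl))
  have hlim := hzero.add_const (-(x ^ 2 / 2 : ℝ) : ℂ)
  rw [zero_add] at hlim
  refine hlim.congr' (hsq.mono fun n hn => ?_)
  simp only [Function.comp_apply, Finset.sum_range_succ, Finset.sum_range_zero] at hn ⊢
  push_cast [Nat.factorial] at hn ⊢
  linear_combination (-1/2 : ℂ) * hn

variable {α : Type*} {p : α → ℝ}

lemma tsum_smul_exp_sub_one (hp : IsProb p) {a : α → ℝ} (ha : HasSum (fun s => p s * a s) 0) :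
    (∑' s, p s • Complex.exp (a s * Complex.I)) - 1 =
      ∑' s, p s • (Complex.exp (a s * Complex.I) - 1 - a s * Complex.I) := by
  have hexp : Summable fun s => p s • Complex.exp (a s * Complex.I) :=
    hp.summable_smul (C := 1) fun s => (Complex.norm_exp_ofReal_mul_I _).le
  have hlin : HasSum (fun s => p s • (a s * Complex.I)) 0 := by
    simpa [mul_assoc] using (Complex.hasSum_ofReal.2 ha).mul_right Complex.I
  simp only [smul_sub]
  rw [((hexp.hasSum.sub (hp.hasSum_smul_const 1)).sub hlin).tsum_eq, sub_zero]

lemma tendsto_mul_tsum_exp_sub_one (hp : IsProb p) {a : α → ℝ}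
    (ha : HasSum (fun s => p s * a s) 0) (ha2 : Summable fun s => p s * a s ^ 2) :
    Tendsto (fun n : ℕ => (n : ℂ) * ((∑' s, p s • Complex.exp ((a s / √n : ℝ) * Complex.I)) - 1))
      atTop (nhds (-((∑' s, p s * a s ^ 2) / 2 : ℝ))) := by
  have hbound : ∀ (n : ℕ) s, ‖p s • ((n : ℂ) * (Complex.exp ((a s / √n : ℝ) * Complex.I) - 1
      - (a s / √n : ℝ) * Complex.I))‖ ≤ 3 * (p s * a s ^ 2) := fun n s => by
    rw [mul_left_comm]
    refine hp.norm_smul_le ?_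
    rw [norm_mul, Complex.norm_natCast]
    rcases n.eq_zero_or_pos with rfl | hn
    · simpa using sq_nonneg (a s)
    · calc _ ≤ (n : ℝ) * (3 * (a s / √n) ^ 2) :=
            mul_le_mul_of_nonneg_left (norm_exp_sub_one_sub_le _) n.cast_nonneg
        _ = 3 * a s ^ 2 := by rw [mul_left_comm, natCast_mul_div_sqrt_sq _ hn]
  have hlim := tendsto_tsum_of_dominated_convergence (ha2.mul_left 3)
    (fun s => (tendsto_mul_exp_sub_one_sub (a s)).const_smul (p s))
    (Eventually.of_forall hbound)
  convert! hlim using 1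
  · funext n
    rw [tsum_smul_exp_sub_one hp (by simpa [mul_div_assoc] using ha.div_const √n), ← tsum_mul_left]
    exact tsum_congr fun s => mul_smul_comm _ _ _
  · congr 1
    rw [← tsum_div_const, ← Complex.ofReal_neg, ← tsum_neg, Complex.ofReal_tsum]
    refine tsum_congr fun s => ?_
    rw [Complex.real_smul]
    push_cast
    ring

end Taylor

section PlaneWave

variable {G ι : Type*} [Fintype ι]

/-- The plane wave `γ ↦ exp(i⟨v, M(γ)⟩)`. -/
noncomputable def planeWave (M : G → ι → ℝ) (v : ι → ℝ) (γ : G) : ℂ :=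
  Complex.exp ((∑ i, v i * M γ i : ℝ) * Complex.I)

lemma norm_planeWave (M : G → ι → ℝ) (v : ι → ℝ) (γ : G) : ‖planeWave M v γ‖ = 1 :=
  Complex.norm_exp_ofReal_mul_I _

lemma planeWave_zero (M : G → ι → ℝ) (γ : G) : planeWave M 0 γ = 1 := by simp [planeWave]

lemma continuous_planeWave (M : G → ι → ℝ) (γ : G) : Continuous fun v => planeWave M v γ := by
  unfold planeWave
  fun_prop

lemma norm_planeWave_mul (M : G → ι → ℝ) (v : ι → ℝ) (u : G → ℂ) (γ : G) :
    ‖(planeWave M v * u) γ‖ = ‖u γ‖ := by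
  rw [Pi.mul_apply, norm_mul, norm_planeWave, one_mul]

variable [Group G]

/-- The increment from `γ` to `γ s` of `M` in the direction `w`. -/
noncomputable def increment (M : G → ι → ℝ) (w : ι → ℝ) (γ s : G) : ℝ :=
  ∑ i, w i * (M (γ * s) i - M γ i)

lemma increment_div (M : G → ι → ℝ) (w : ι → ℝ) (c : ℝ) (γ s : G) :
    increment M (fun i => w i / c) γ s = increment M w γ s / c := by
  rw [increment, increment, Finset.sum_div]
  exact Finset.sum_congr rfl fun i _ => by ring

lemma planeWave_mul (M : G → ι → ℝ) (v : ι → ℝ) (γ s : G) :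
    planeWave M v (γ * s) = planeWave M v γ * Complex.exp (increment M v γ s * Complex.I) := by
  rw [planeWave, planeWave, increment, ← Complex.exp_add, ← add_mul, ← Complex.ofReal_add,
    ← Finset.sum_add_distrib]
  simp only [← mul_add, add_sub_cancel]

/-- The conjugate of the Markov operator of `p` by the plane wave of frequency `v`. -/
noncomputable def twistedOp (M : G → ι → ℝ) (p : G → ℝ) (v : ι → ℝ) (u : G → ℂ) (γ : G) : ℂ :=
  ∑' s, p s • (Complex.exp (increment M v γ s * Complex.I) * u (γ * s))

lemma markovOp_planeWave_mul (M : G → ι → ℝ) (p : G → ℝ) (v : ι → ℝ) (u : G → ℂ) :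
    markovOp p (planeWave M v * u) = planeWave M v * twistedOp M p v u := by
  funext γ
  simp only [markovOp, twistedOp, Pi.mul_apply, ← tsum_mul_left]
  exact tsum_congr fun s => by rw [planeWave_mul, mul_smul_comm, mul_assoc]

lemma twistedOp_zero (M : G → ι → ℝ) (p : G → ℝ) (u : G → ℂ) :
    twistedOp M p 0 u = markovOp p u := by
  funext γ
  simp [twistedOp, markovOp, increment]

variable {p : G → ℝ}

lemma norm_exp_increment_mul_le (M : G → ι → ℝ) (v : ι → ℝ) {u : G → ℂ} {C : ℝ}
    (hC : ∀ γ, ‖u γ‖ ≤ C) (γ s : G) :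
    ‖Complex.exp (increment M v γ s * Complex.I) * u (γ * s)‖ ≤ C := by
  rw [norm_mul, Complex.norm_exp_ofReal_mul_I, one_mul]
  exact hC _

lemma continuous_twistedOp (M : G → ι → ℝ) (hp : IsProb p) {u : G → ℂ} {C : ℝ}
    (hC : ∀ γ, ‖u γ‖ ≤ C) (γ : G) : Continuous fun v => twistedOp M p v u γ :=
  continuous_tsum (fun s => by unfold increment; fun_prop) (hp.summable.mul_right C)
    fun s v => hp.norm_smul_le (norm_exp_increment_mul_le M v hC γ s)

lemma tendsto_twistedOp (M : G → ι → ℝ) (hp : IsProb p) {u : G → ℂ} {C : ℝ}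
    (hC : ∀ γ, ‖u γ‖ ≤ C) (γ : G) :
    Tendsto (fun v => twistedOp M p v u γ) (nhds 0) (nhds (markovOp p u γ)) :=
  twistedOp_zero M p u ▸ (continuous_twistedOp M hp hC γ).tendsto 0

lemma twistedOp_add_div (M : G → ι → ℝ) (hp : IsProb p) (v : ι → ℝ) {u r : G → ℂ} {C D : ℝ}
    (hC : ∀ γ, ‖u γ‖ ≤ C) (hD : ∀ γ, ‖r γ‖ ≤ D) (c : ℂ) (γ : G) :
    twistedOp M p v (fun g => u g + r g / c) γ
      = twistedOp M p v u γ + twistedOp M p v r γ / c := by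
  simp only [twistedOp]
  rw [← tsum_div_const, ← Summable.tsum_add
    (hp.summable_smul (norm_exp_increment_mul_le M v hC γ))
    ((hp.summable_smul (norm_exp_increment_mul_le M v hD γ)).div_const c)]
  exact tsum_congr fun s => by simp only [Complex.real_smul]; ring

lemma tendsto_markovOp_planeWave_mul_one_add_div_sub (hp : IsProb p) (M : G → ι → ℝ)
    (v : ℕ → ι → ℝ) {r : G → ℂ} {C : ℝ} (hC : ∀ γ, ‖r γ‖ ≤ C) :
    Tendsto (fun n : ℕ => markovOp (convPow p n) (planeWave M (v n) * fun γ => 1 + r γ / n) 1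
      - markovOp (convPow p n) (planeWave M (v n)) 1) atTop (nhds 0) := by
  refine squeeze_zero_norm (fun n => ?_) (tendsto_const_div_atTop_nhds_zero_nat C)
  have hdiv : ∀ γ, ‖(planeWave M (v n) * fun γ => r γ / n) γ‖ ≤ C / n := fun γ => by
    rw [norm_planeWave_mul, norm_div, Complex.norm_natCast]
    gcongr
    exact hC γ
  have hsplit : (planeWave M (v n) * fun γ => 1 + r γ / n)
      = planeWave M (v n) + planeWave M (v n) * fun γ => r γ / n := by
    funext γ
    simp only [Pi.mul_apply, Pi.add_apply, mul_add, mul_one]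
  rw [hsplit, markovOp_add (hp.convPow n) (fun γ => (norm_planeWave M _ γ).le) hdiv,
    Pi.add_apply, add_sub_cancel_left]
  exact norm_markovOp_le (hp.convPow n) hdiv 1

/-- The variance of the increment from `γ` of the walk with law `p`, in the direction `w`; the
increments are assumed to be centered where this is used. -/
noncomputable def incrementVariance (M : G → ι → ℝ) (p : G → ℝ) (w : ι → ℝ) (γ : G) : ℝ :=
  ∑' s, p s * increment M w γ s ^ 2

end PlaneWave

section CenteredWalk

variable {G ι Δ : Type*} [Group G]

/-- The walk with step law `p` is irreducible and aperiodic, and it is turned into a square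
integrable martingale by the map `M`, which is equivariant under the translations. -/
structure IsCenteredWalk (L : LatticeCoords G ι Δ) (M : G → ι → ℝ) (p : G → ℝ) : Prop where
  isProb : IsProb p
  eventuallyPos : EventuallyPos p
  map_trans_mul : ∀ z γ i, M (L.trans z * γ) i = z i + M γ i
  hasSum_mul_sub : ∀ γ i, HasSum (fun s => p s * (M (γ * s) i - M γ i)) 0
  summable_mul_sub_sq : ∀ γ i, Summable fun s => p s * (M (γ * s) i - M γ i) ^ 2

variable [Fintype ι]

/-- The average of the variance of the increments in the direction `w` over a fundamental
domain. -/
noncomputable def meanVariance [Fintype Δ] (L : LatticeCoords G ι Δ) (M : G → ι → ℝ) (p : G → ℝ)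
    (w : ι → ℝ) : ℝ :=
  (Fintype.card Δ : ℝ)⁻¹ * ∑ x, incrementVariance M p w (L.base x)

variable {L : LatticeCoords G ι Δ} {M : G → ι → ℝ} {p : G → ℝ}

lemma meanVariance_nonneg [Fintype Δ] (hp : IsProb p) (w : ι → ℝ) : 0 ≤ meanVariance L M p w :=
  mul_nonneg (by positivity) (Finset.sum_nonneg fun x _ =>
    tsum_nonneg fun s => mul_nonneg (hp.nonneg s) (sq_nonneg _))

namespace IsCenteredWalk

lemma isPeriodic_increment (h : IsCenteredWalk L M p) (w : ι → ℝ) :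
    L.IsPeriodic (increment M w) := fun z γ => by
  funext s
  simp only [increment, mul_assoc, h.map_trans_mul, add_sub_add_left_eq_sub]

lemma isPeriodic_incrementVariance (h : IsCenteredWalk L M p) (w : ι → ℝ) :
    L.IsPeriodic (incrementVariance M p w) := fun z γ => by
  simp only [incrementVariance, h.isPeriodic_increment w z γ]

lemma isPeriodic_twistedOp (h : IsCenteredWalk L M p) (q : G → ℝ) (v : ι → ℝ) {u : G → ℂ}
    (hu : L.IsPeriodic u) : L.IsPeriodic (twistedOp M q v u) := fun z γ => by
  simp only [twistedOp, mul_assoc, hu z, h.isPeriodic_increment v z γ]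

lemma hasSum_increment (h : IsCenteredWalk L M p) (w : ι → ℝ) (γ : G) :
    HasSum (fun s => p s * increment M w γ s) 0 := by
  have hsum := hasSum_sum (s := Finset.univ) fun i _ => (h.hasSum_mul_sub γ i).mul_left (w i)
  simpa only [increment, Finset.mul_sum, mul_left_comm, mul_zero, Finset.sum_const_zero] using hsum

lemma summable_increment_sq (h : IsCenteredWalk L M p) (w : ι → ℝ) (γ : G) :
    Summable fun s => p s * increment M w γ s ^ 2 := by
  refine .of_nonneg_of_le (fun s => mul_nonneg (h.isProb.nonneg s) (sq_nonneg _)) (fun s => ?_)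
    ((summable_sum (s := Finset.univ) fun i _ => h.summable_mul_sub_sq γ i).mul_left
      (∑ i, w i ^ 2))
  rw [← Finset.mul_sum, mul_left_comm]
  exact mul_le_mul_of_nonneg_left (Finset.sum_mul_sq_le_sq_mul_sq _ _ _) (h.isProb.nonneg s)

lemma tendsto_mul_twistedOp_one_sub_one (h : IsCenteredWalk L M p) (w : ι → ℝ) (γ : G) :
    Tendsto (fun n : ℕ => (n : ℂ) * (twistedOp M p (fun i => w i / √n) (fun _ => 1) γ - 1)) atTop
      (nhds (-(incrementVariance M p w γ / 2 : ℝ))) := by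
  simpa only [twistedOp, incrementVariance, increment_div, mul_one] using
    tendsto_mul_tsum_exp_sub_one h.isProb (h.hasSum_increment w γ) (h.summable_increment_sq w γ)

lemma eventually_norm_twistedOp_sub_le [Finite Δ] (h : IsCenteredWalk L M p) {q : G → ℝ}
    (hq : IsProb q) {u : G → ℂ} (hu : L.IsPeriodic u) {ε : ℝ} (hε : 0 < ε) :
    ∀ᶠ v in nhds 0, ∀ γ, ‖twistedOp M q v u γ - markovOp q u γ‖ ≤ ε := by
  obtain ⟨C, hC⟩ := hu.exists_norm_le
  have hbase : ∀ᶠ v in nhds 0, ∀ x,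
      ‖twistedOp M q v u (L.base x) - markovOp q u (L.base x)‖ < ε :=
    eventually_all.2 fun x => (tendsto_iff_norm_sub_tendsto_zero.1
      (tendsto_twistedOp M hq hC (L.base x))).eventually_lt_const hε
  filter_upwards [hbase] with v hv γ
  rw [← (h.isPeriodic_twistedOp q v hu).apply_base_orbit, ← (hu.markovOp q).apply_base_orbit]
  exact (hv _).le

variable [Fintype Δ]

lemma tendsto_markovOp_planeWave_mul_of_mem_meanZero (h : IsCenteredWalk L M p) {u : G → ℂ}
    (hu : u ∈ L.meanZero ℂ) {v : ℕ → ι → ℝ} (hv : Tendsto v atTop (nhds 0)) :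
    Tendsto (fun n => markovOp (convPow p n) (planeWave M (v n) * u) 1) atTop (nhds 0) := by
  obtain ⟨C, hC⟩ := hu.1.exists_norm_le
  rw [Metric.tendsto_nhds]
  intro ε hε
  obtain ⟨j, hj⟩ := LatticeCoords.exists_norm_markovOp_convPow_le h.isProb h.eventuallyPos hu
    (by positivity : 0 < ε / 3)
  filter_upwards [hv.eventually (h.eventually_norm_twistedOp_sub_le (h.isProb.convPow j) hu.1
    (by positivity : 0 < ε / 3)), eventually_ge_atTop j] with n hn hnj
  have hsmall : ∀ γ, ‖markovOp (convPow p j) (planeWave M (v n) * u) γ‖ ≤ ε / 3 + ε / 3 := by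
    intro γ
    rw [markovOp_planeWave_mul, norm_planeWave_mul]
    exact (norm_le_norm_add_norm_sub' _ _).trans (add_le_add (hj γ) (hn γ))
  have hsplit := markovOp_convPow_add h.isProb (n - j) j
    (fun γ => (norm_planeWave_mul M (v n) u γ).trans_le (hC γ))
  rw [Nat.sub_add_cancel hnj] at hsplit
  rw [dist_zero_right, hsplit]
  exact (norm_markovOp_le (h.isProb.convPow _) hsmall 1).trans_lt (by linarith)

/-- Solving the Poisson equation replaces the variance of the increments by its mean. -/
lemma exists_corrector (h : IsCenteredWalk L M p) (w : ι → ℝ) :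
    ∃ r : G → ℂ, L.IsPeriodic r ∧ ∀ γ, r γ - markovOp p r γ
      = ((meanVariance L M p w / 2 - incrementVariance M p w γ / 2 : ℝ) : ℂ) := by
  have : Nonempty Δ := ⟨L.orbit 1⟩
  have hcard : (Fintype.card Δ : ℝ) ≠ 0 := Nat.cast_ne_zero.2 Fintype.card_ne_zero
  obtain ⟨r, hr, hpoisson⟩ := LatticeCoords.exists_sub_markovOp_eq h.isProb h.eventuallyPos
    (L := L) (b := fun γ =>
      ((meanVariance L M p w / 2 - incrementVariance M p w γ / 2 : ℝ) : ℂ)) ⟨fun z γ => by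
    simp only [h.isPeriodic_incrementVariance w z γ], by
    rw [← Complex.ofReal_sum, Finset.sum_sub_distrib, ← Finset.sum_div, ← Finset.sum_div,
      Finset.sum_const, Finset.card_univ, nsmul_eq_mul, meanVariance, mul_inv_cancel_left₀ hcard,
      sub_self, Complex.ofReal_zero]⟩
  exact ⟨r, hr.1, congrFun hpoisson⟩

lemma tendsto_mul_twistedOp_corrected_sub (h : IsCenteredWalk L M p) (w : ι → ℝ) {r : G → ℂ}
    {C : ℝ} (hC : ∀ γ, ‖r γ‖ ≤ C) {γ : G} (hr : r γ - markovOp p r γ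
      = ((meanVariance L M p w / 2 - incrementVariance M p w γ / 2 : ℝ) : ℂ)) :
    Tendsto (fun n : ℕ => (n : ℂ) * (twistedOp M p (fun i => w i / √n) (fun g => 1 + r g / n) γ
      - (1 - (meanVariance L M p w / 2 : ℝ) / n) * (1 + r γ / n))) atTop (nhds 0) := by
  set V : ℂ := ((meanVariance L M p w / 2 : ℝ) : ℂ) with hV
  have hfreq : Tendsto (fun (n : ℕ) i => w i / √n) atTop (nhds 0) :=
    tendsto_pi_nhds.2 fun i => tendsto_div_sqrt (w i)
  have hlim := (((h.tendsto_mul_twistedOp_one_sub_one w γ).add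
    ((tendsto_twistedOp M h.isProb hC γ).comp hfreq)).sub_const (r γ)).add_const V |>.add
    (tendsto_const_div_atTop_nhds_zero_nat (V * r γ))
  have hzero : -((incrementVariance M p w γ / 2 : ℝ) : ℂ) + markovOp p r γ - r γ + V + 0 = 0 := by
    push_cast [hV] at hr ⊢
    linear_combination -hr
  rw [hzero] at hlim
  refine hlim.congr' ?_
  filter_upwards [eventually_ne_atTop 0] with n hn
  have hn' : (n : ℂ) ≠ 0 := Nat.cast_ne_zero.2 hn
  rw [twistedOp_add_div (C := 1) M h.isProb _ (fun _ => by simp) hC]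
  simp only [Function.comp_apply]
  field_simp
  ring

lemma eventually_norm_twistedOp_corrected_sub_le (h : IsCenteredWalk L M p) (w : ι → ℝ)
    {r : G → ℂ} (hper : L.IsPeriodic r) (hr : ∀ γ, r γ - markovOp p r γ
      = ((meanVariance L M p w / 2 - incrementVariance M p w γ / 2 : ℝ) : ℂ)) {ε : ℝ}
    (hε : 0 < ε) : ∀ᶠ n : ℕ in atTop, ∀ γ,
      ‖twistedOp M p (fun i => w i / √n) (fun g => 1 + r g / n) γ
        - (1 - (meanVariance L M p w / 2 : ℝ) / n) * (1 + r γ / n)‖ ≤ ε / n := by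
  obtain ⟨C, hC⟩ := hper.exists_norm_le
  filter_upwards [eventually_all.2 fun x => (tendsto_zero_iff_norm_tendsto_zero.1
    (h.tendsto_mul_twistedOp_corrected_sub w hC (hr (L.base x)))).eventually_lt_const hε,
    eventually_gt_atTop 0] with n hn hn0 γ
  have hper' : L.IsPeriodic fun g => 1 + r g / (n : ℂ) := fun z g => by simp only [hper z g]
  rw [← (h.isPeriodic_twistedOp p _ hper').apply_base_orbit γ, ← hper.apply_base_orbit γ,
    le_div_iff₀ (by exact_mod_cast hn0), mul_comm]
  simpa only [norm_mul, Complex.norm_natCast] using (hn (L.orbit γ)).le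

/-- The corrected plane wave is an approximate eigenfunction, of eigenvalue `1 - V / (2n)`. -/
lemma tendsto_markovOp_planeWave_corrected_sub (h : IsCenteredWalk L M p) (w : ι → ℝ) {r : G → ℂ}
    (hper : L.IsPeriodic r) (hr : ∀ γ, r γ - markovOp p r γ
      = ((meanVariance L M p w / 2 - incrementVariance M p w γ / 2 : ℝ) : ℂ)) :
    Tendsto (fun n : ℕ =>
      markovOp (convPow p n) (planeWave M (fun i => w i / √n) * fun γ => 1 + r γ / n) 1
        - (1 - (meanVariance L M p w / 2 : ℝ) / n) ^ n *
          (planeWave M (fun i => w i / √n) 1 * (1 + r 1 / n))) atTop (nhds 0) := by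
  obtain ⟨C, hC⟩ := hper.exists_norm_le
  set V := meanVariance L M p w / 2
  have hV0 : 0 ≤ V := div_nonneg (meanVariance_nonneg h.isProb w) two_pos.le
  rw [Metric.tendsto_nhds]
  intro ε hε
  filter_upwards [h.eventually_norm_twistedOp_corrected_sub_le w hper hr (half_pos hε),
    eventually_gt_atTop 0, eventually_ge_atTop ⌈V⌉₊] with n hn hn0 hnV
  replace hn0 : (0 : ℝ) < n := Nat.cast_pos.2 hn0
  have hbound : ∀ γ, ‖(planeWave M (fun i => w i / √n) * fun γ => 1 + r γ / n) γ‖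
      ≤ 1 + C / n := fun γ => by
    rw [norm_planeWave_mul]
    refine (norm_add_le _ _).trans ?_
    rw [norm_one, norm_div, Complex.norm_natCast]
    gcongr
    exact hC γ
  have hle : ‖(1 - V / n : ℂ)‖ ≤ 1 := by
    rw [← Complex.ofReal_natCast, ← Complex.ofReal_div, ← Complex.ofReal_one, ← Complex.ofReal_sub,
      Complex.norm_real, Real.norm_of_nonneg (sub_nonneg.2
        ((div_le_one hn0).2 (Nat.ceil_le.1 hnV)))]
    exact sub_le_self _ (by positivity)
  have heigen := norm_markovOp_convPow_sub_pow_smul_le h.isProb hbound hle (η := ε / 2 / n)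
    (fun γ => by
      rw [markovOp_planeWave_mul, smul_eq_mul, Pi.mul_apply, Pi.mul_apply, mul_left_comm, ← mul_sub,
        norm_mul, norm_planeWave, one_mul]
      exact hn γ) n 1
  rw [dist_zero_right]
  rw [mul_div_cancel₀ _ hn0.ne'] at heigen
  exact heigen.trans_lt (half_lt_self hε)

lemma tendsto_markovOp_planeWave (h : IsCenteredWalk L M p) (w : ι → ℝ) :
    Tendsto (fun n : ℕ => markovOp (convPow p n) (planeWave M fun i => w i / √n) 1) atTop
      (nhds (Complex.exp (-(meanVariance L M p w / 2 : ℝ)))) := by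
  obtain ⟨r, hper, hr⟩ := h.exists_corrector w
  obtain ⟨C, hC⟩ := hper.exists_norm_le
  have hwave : Tendsto (fun n : ℕ => planeWave M (fun i => w i / √n) 1) atTop (nhds 1) :=
    planeWave_zero M 1 ▸ ((continuous_planeWave M 1).tendsto 0).comp
      (tendsto_pi_nhds.2 fun i => tendsto_div_sqrt (w i))
  have hcorrector : Tendsto (fun n : ℕ => 1 + r 1 / n) atTop (nhds 1) := by
    simpa using (tendsto_const_div_atTop_nhds_zero_nat (r 1)).const_add 1
  have hpow := Complex.tendsto_one_add_div_pow_exp (-((meanVariance L M p w / 2 : ℝ) : ℂ))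
  simp only [neg_div, ← sub_eq_add_neg] at hpow
  have hlim := ((h.tendsto_markovOp_planeWave_corrected_sub w hper hr).add
    (hpow.mul (hwave.mul hcorrector))).sub (tendsto_markovOp_planeWave_mul_one_add_div_sub
      h.isProb M (fun n i => w i / √n) hC)
  simpa only [sub_add_cancel, sub_sub_cancel, mul_one, zero_add, sub_zero] using hlim

/-- The central limit theorem, jointly with the equidistribution of the walk among the orbits. -/
lemma tendsto_markovOp_planeWave_mul (h : IsCenteredWalk L M p) {u : G → ℂ} (hu : L.IsPeriodic u)
    (w : ι → ℝ) :
    Tendsto (fun n : ℕ => markovOp (convPow p n) (planeWave M (fun i => w i / √n) * u) 1) atTop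
      (nhds ((Fintype.card Δ : ℂ)⁻¹ * (∑ x, u (L.base x)) *
        Complex.exp (-(meanVariance L M p w / 2 : ℝ)))) := by
  have : Nonempty Δ := ⟨L.orbit 1⟩
  have hcard : (Fintype.card Δ : ℂ) ≠ 0 := Nat.cast_ne_zero.2 Fintype.card_ne_zero
  obtain ⟨C, hC⟩ := hu.exists_norm_le
  set m := (Fintype.card Δ : ℂ)⁻¹ * ∑ x, u (L.base x) with hm
  have hmean : (fun γ => u γ - m) ∈ L.meanZero ℂ := ⟨fun z γ => by simp only [hu z γ], by
    rw [Finset.sum_sub_distrib, Finset.sum_const, Finset.card_univ, nsmul_eq_mul, hm,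
      mul_inv_cancel_left₀ hcard, sub_self]⟩
  have hlim := (h.tendsto_markovOp_planeWave_mul_of_mem_meanZero hmean
    (tendsto_pi_nhds.2 fun i => tendsto_div_sqrt (w i))).add
    ((h.tendsto_markovOp_planeWave w).const_mul m)
  rw [zero_add] at hlim
  refine hlim.congr fun n => ?_
  have hbound : ∀ γ, ‖(planeWave M (fun i => w i / √n) * fun γ => u γ - m) γ‖ ≤ C + ‖m‖ :=
    fun γ => (norm_planeWave_mul M _ _ γ).trans_le
      ((norm_sub_le _ _).trans (add_le_add_left (hC γ) _))
  have hconst : ∀ γ, ‖(m • planeWave M fun i => w i / √n) γ‖ ≤ ‖m‖ := fun γ => by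
    rw [Pi.smul_apply, norm_smul, norm_planeWave, mul_one]
  rw [← smul_eq_mul m, ← Pi.smul_apply, ← markovOp_smul, ← Pi.add_apply,
    ← markovOp_add (h.isProb.convPow n) hbound hconst]
  congr 1
  funext γ
  simp only [Pi.add_apply, Pi.mul_apply, Pi.smul_apply, smul_eq_mul]
  ring

end IsCenteredWalk

end CenteredWalk

section GaussianDomination

lemma norm_one_add_exp_le {x : ℝ} (hx : |x| ≤ Real.pi) :
    ‖1 + Complex.exp (x * Complex.I)‖ ≤ 2 - x ^ 2 / Real.pi ^ 2 := by
  have hle : x ^ 2 / Real.pi ^ 2 ≤ 1 :=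
    (div_le_one (by positivity)).2 (sq_le_sq' (abs_le.1 hx).1 (abs_le.1 hx).2)
  have hcos : Real.cos x ≤ 1 - 2 * (x ^ 2 / Real.pi ^ 2) :=
    (Real.cos_le_one_sub_mul_cos_sq hx).trans_eq (by ring)
  refine abs_le_of_sq_le_sq' ?_ (by linarith) |>.2
  rw [← Complex.normSq_eq_norm_sq, Complex.normSq_apply]
  simp only [Complex.add_re, Complex.add_im, Complex.one_re, Complex.one_im,
    Complex.exp_ofReal_mul_I_re, Complex.exp_ofReal_mul_I_im]
  nlinarith [sq_nonneg (x ^ 2 / Real.pi ^ 2), Real.sin_sq_add_cos_sq x]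

namespace LatticeCoords

variable {G ι Δ : Type*} [Group G] [Fintype ι] {L : LatticeCoords G ι Δ}

/-- Equivariance of a function under the translations, with the character of frequency `v`. -/
def IsQuasiperiodic (L : LatticeCoords G ι Δ) (v : ι → ℝ) (f : G → ℂ) : Prop :=
  ∀ z γ, f (L.trans z * γ) = Complex.exp ((∑ i, v i * z i : ℝ) * Complex.I) * f γ

variable {v : ι → ℝ} {f : G → ℂ}

lemma IsQuasiperiodic.markovOp (hf : L.IsQuasiperiodic v f) (q : G → ℝ) :
    L.IsQuasiperiodic v (markovOp q f) := fun z γ => by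
  simp only [NSVA.markovOp, mul_assoc, hf z, ← tsum_mul_left, mul_smul_comm]

lemma IsQuasiperiodic.norm_apply_base_orbit (hf : L.IsQuasiperiodic v f) (γ : G) :
    ‖f (L.base (L.orbit γ))‖ = ‖f γ‖ := by
  conv_rhs => rw [← L.trans_pos_mul_base_orbit γ, hf, norm_mul, Complex.norm_exp_ofReal_mul_I,
    one_mul]

lemma IsQuasiperiodic.apply_trans_single_mul (hf : L.IsQuasiperiodic v f) (i : ι) (γ : G) :
    f (L.trans (Pi.single i 1) * γ) = Complex.exp (v i * Complex.I) * f γ := by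
  rw [hf, Finset.sum_eq_single i] <;> simp +contextual

/-- Interference between the contributions of the identity and of a unit translation. -/
lemma IsQuasiperiodic.norm_markovOp_base_le (hf : L.IsQuasiperiodic v f) {q : G → ℝ}
    (hq : IsProb q) {C : ℝ} (hC : ∀ γ, ‖f γ‖ ≤ C) {i : ι} (hv : |v i| ≤ Real.pi) {ε : ℝ}
    (hε : 0 ≤ ε) {x : Δ} (h1 : ε ≤ q 1)
    (hi : ε ≤ q ((L.base x)⁻¹ * (L.trans (Pi.single i 1) * L.base x))) :
    ‖NSVA.markovOp q f (L.base x)‖ ≤ (1 - ε / Real.pi ^ 2 * v i ^ 2) * C := by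
  have hne : (1 : G) ≠ (L.base x)⁻¹ * (L.trans (Pi.single i 1) * L.base x) := fun h => by
    have hpos := congrArg L.pos (inv_mul_eq_one.1 h.symm)
    rw [pos_trans_mul, pos_base, add_zero] at hpos
    simpa using congrFun hpos i
  have hpair := hq.norm_tsum_smul_le_of_ne (f := fun s => f (L.base x * s)) (fun s => hC _)
    hne hε h1 hi
  rw [mul_one, mul_inv_cancel_left, hf.apply_trans_single_mul, ← one_add_mul, norm_mul] at hpair
  have hphase : ‖1 + Complex.exp (v i * Complex.I)‖ * ‖f (L.base x)‖
      ≤ (2 - v i ^ 2 / Real.pi ^ 2) * C :=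
    mul_le_mul (norm_one_add_exp_le hv) (hC _) (norm_nonneg _)
      ((norm_nonneg _).trans (norm_one_add_exp_le hv))
  refine hpair.trans ((add_le_add_left (mul_le_mul_of_nonneg_left hphase hε) _).trans_eq ?_)
  ring

variable {p : G → ℝ}

lemma exists_contraction_quasiperiodic [Finite Δ] (L : LatticeCoords G ι Δ) (hp : IsProb p)
    (hpos : EventuallyPos p) :
    ∃ k, 0 < k ∧ ∃ a : ℝ, 0 < a ∧ ∀ (v : ι → ℝ) (i : ι), |v i| ≤ Real.pi → a * v i ^ 2 ≤ 1 ∧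
      ∀ f, L.IsQuasiperiodic v f → ∀ C, (∀ γ, ‖f γ‖ ≤ C) →
        ∀ γ, ‖NSVA.markovOp (convPow p k) f γ‖ ≤ (1 - a * v i ^ 2) * C := by
  let g : Option (ι × Δ) → G := fun o => o.elim 1 fun y =>
    (L.base y.2)⁻¹ * (L.trans (Pi.single y.1 1) * L.base y.2)
  obtain ⟨k, hk, hk0⟩ :=
    ((eventually_all.2 fun o => hpos (g o)).and (eventually_gt_atTop 0)).exists
  obtain ⟨o, ho⟩ := Finite.exists_min fun o => convPow p k (g o)
  refine ⟨k, hk0, convPow p k (g o) / Real.pi ^ 2, div_pos (hk o) (by positivity),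
    fun v i hv => ⟨?_, fun f hf C hC γ => ?_⟩⟩
  · rw [div_mul_eq_mul_div, div_le_one (by positivity)]
    exact (mul_le_of_le_one_left (sq_nonneg _) ((hp.convPow k).le_one _)).trans
      (sq_le_sq' (abs_le.1 hv).1 (abs_le.1 hv).2)
  · rw [← (hf.markovOp _).norm_apply_base_orbit]
    exact hf.norm_markovOp_base_le (hp.convPow k) hC hv (hk o).le (ho none)
      (ho (some (i, L.orbit γ)))

lemma exists_norm_markovOp_convPow_le_exp_neg_sq [Finite Δ] (L : LatticeCoords G ι Δ)
    (hp : IsProb p) (hpos : EventuallyPos p) :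
    ∃ a : ℝ, 0 < a ∧ ∃ N : ℕ, ∀ n ≥ N, ∀ (v : ι → ℝ) (i : ι), |v i| ≤ Real.pi →
      ∀ f, L.IsQuasiperiodic v f → ∀ C, (∀ γ, ‖f γ‖ ≤ C) →
        ∀ γ, ‖NSVA.markovOp (convPow p n) f γ‖ ≤ Real.exp (-(a * n * v i ^ 2)) * C := by
  obtain ⟨k, hk, a, ha, hcontr⟩ := exists_contraction_quasiperiodic L hp hpos
  have : (0 : ℝ) < k := Nat.cast_pos.2 hk
  refine ⟨a / (2 * k), by positivity, k, fun n hn v i hv f hf C hC γ => ?_⟩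
  obtain ⟨hle, hcontr⟩ := hcontr v i hv
  have hblocks := norm_markovOp_convPow_mul_le (S := {f | L.IsQuasiperiodic v f}) hp
    (fun f hf => hf.markovOp (convPow p k)) hcontr hf hC (n / k)
  rw [← Nat.mod_add_div n k, markovOp_convPow_add hp _ _ hC, Nat.mod_add_div]
  refine (norm_markovOp_le (hp.convPow _) hblocks γ).trans
    (mul_le_mul_of_nonneg_right ?_ ((norm_nonneg _).trans (hC 1)))
  have hn2 : (n : ℝ) ≤ 2 * k * (n / k : ℕ) := by
    have hlt := Nat.lt_mul_div_succ n hk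
    have hone := Nat.mul_le_mul_left k (Nat.div_pos hn hk)
    exact_mod_cast (by linarith : n ≤ 2 * k * (n / k))
  calc (1 - a * v i ^ 2) ^ (n / k) ≤ Real.exp (-(a * v i ^ 2)) ^ (n / k) :=
        pow_le_pow_left₀ (sub_nonneg.2 hle) (Real.one_sub_le_exp_neg _) _
    _ = Real.exp (-(a / (2 * k) * (2 * k * (n / k : ℕ)) * v i ^ 2)) := by
        rw [← Real.exp_nat_mul]
        congr 1
        field_simp
    _ ≤ Real.exp (-(a / (2 * k) * n * v i ^ 2)) := by gcongr

lemma exists_norm_markovOp_convPow_le_exp_neg_sum_sq [Finite Δ] (L : LatticeCoords G ι Δ)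
    (hp : IsProb p) (hpos : EventuallyPos p) :
    ∃ a : ℝ, 0 < a ∧ ∃ N : ℕ, ∀ n ≥ N, ∀ v : ι → ℝ, (∀ i, |v i| ≤ Real.pi) →
      ∀ f, L.IsQuasiperiodic v f → ∀ C, (∀ γ, ‖f γ‖ ≤ C) →
        ∀ γ, ‖NSVA.markovOp (convPow p n) f γ‖ ≤ Real.exp (-(a * n * ∑ i, v i ^ 2)) * C := by
  rcases isEmpty_or_nonempty ι with hι | hι
  · exact ⟨1, one_pos, 0, fun n _ v _ f _ C hC γ => by
      simpa using norm_markovOp_le (hp.convPow n) hC γ⟩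
  obtain ⟨a, ha, N, hN⟩ := exists_norm_markovOp_convPow_le_exp_neg_sq L hp hpos
  have : (0 : ℝ) < Fintype.card ι := Nat.cast_pos.2 Fintype.card_pos
  refine ⟨a / Fintype.card ι, by positivity, N, fun n hn v hv f hf C hC γ => ?_⟩
  obtain ⟨j, hj⟩ := Finite.exists_max fun i => v i ^ 2
  have hsum : ∑ i, v i ^ 2 ≤ Fintype.card ι * v j ^ 2 := by
    rw [← nsmul_eq_mul]
    exact Finset.sum_le_card_nsmul _ _ _ fun i _ => hj i
  refine (hN n hn v j (hv j) f hf C hC γ).trans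
    (mul_le_mul_of_nonneg_right (Real.exp_le_exp.2 (neg_le_neg ?_)) ((norm_nonneg _).trans (hC 1)))
  calc a / Fintype.card ι * n * ∑ i, v i ^ 2
      ≤ a / Fintype.card ι * n * (Fintype.card ι * v j ^ 2) := by gcongr
    _ = a * n * v j ^ 2 := by field_simp

end LatticeCoords

end GaussianDomination

section Fourier

/-- The cube of frequencies dual to `ι → ℤ`, where `k ↦ exp(i⟨v, k⟩)` are the characters. -/
def frequencyCube (ι : Type*) : Set (ι → ℝ) := Set.univ.pi fun _ => Set.Ioc (-Real.pi) Real.pi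

lemma abs_le_pi_of_mem_frequencyCube {ι : Type*} {v : ι → ℝ} (hv : v ∈ frequencyCube ι) (i : ι) :
    |v i| ≤ Real.pi :=
  abs_le.2 ⟨(hv i trivial).1.le, (hv i trivial).2⟩

lemma measurableSet_frequencyCube {ι : Type*} [Countable ι] : MeasurableSet (frequencyCube ι) :=
  .univ_pi fun _ => measurableSet_Ioc

variable {ι : Type*} [Fintype ι]

instance : IsFiniteMeasure (volume.restrict (frequencyCube ι)) := ⟨by
  rw [Measure.restrict_apply_univ, frequencyCube, volume_pi, Measure.pi_pi]
  exact ENNReal.prod_lt_top fun _ _ => measure_Ioc_lt_top⟩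

lemma setIntegral_exp_mul_int (k : ℤ) :
    ∫ x in Set.Ioc (-Real.pi) Real.pi, Complex.exp ((x * k : ℝ) * Complex.I)
      = if k = 0 then (2 * Real.pi : ℂ) else 0 := by
  rw [← intervalIntegral.integral_of_le (by linarith [Real.pi_pos])]
  split_ifs with hk
  · simp only [hk, Int.cast_zero, mul_zero, Complex.ofReal_zero, zero_mul, Complex.exp_zero,
      intervalIntegral.integral_const, Complex.real_smul, mul_one]
    push_cast
    ring
  · have hkI : (k : ℂ) * Complex.I ≠ 0 := mul_ne_zero (Int.cast_ne_zero.2 hk) Complex.I_ne_zero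
    have hcomm : ∀ x : ℝ, ((x * k : ℝ) : ℂ) * Complex.I = k * Complex.I * x := fun x => by
      push_cast
      ring
    have hends : Complex.exp (k * Complex.I * (Real.pi : ℝ))
        = Complex.exp (k * Complex.I * (-Real.pi : ℝ)) :=
      Complex.exp_eq_exp_iff_exists_int.2 ⟨k, by push_cast; ring⟩
    simp only [hcomm]
    rw [integral_exp_mul_complex hkI, hends, sub_self, zero_div]

lemma setIntegral_frequencyCube_exp (k : ι → ℤ) :
    ∫ v in frequencyCube ι, Complex.exp ((∑ i, v i * k i : ℝ) * Complex.I)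
      = if k = 0 then ((2 * Real.pi : ℝ) : ℂ) ^ Fintype.card ι else 0 := by
  have hprod : ∀ v : ι → ℝ, Complex.exp ((∑ i, v i * k i : ℝ) * Complex.I)
      = ∏ i, Complex.exp ((v i * k i : ℝ) * Complex.I) := fun v => by
    rw [← Complex.exp_sum, ← Finset.sum_mul, ← Complex.ofReal_sum]
  simp only [hprod]
  rw [frequencyCube, volume_pi, Measure.restrict_pi_pi, integral_fintype_prod_eq_prod (𝕜 := ℂ)
    fun i (x : ℝ) => Complex.exp ((x * k i : ℝ) * Complex.I)]
  simp only [setIntegral_exp_mul_int]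
  split_ifs with hk
  · simp [hk, Finset.card_univ]
  · obtain ⟨i, hi⟩ := Function.ne_iff.1 hk
    exact Finset.prod_eq_zero (Finset.mem_univ i) (if_neg hi)

variable {G Δ : Type*} [Group G] (L : LatticeCoords G ι Δ) (y : Δ)

/-- The plane wave on the orbit `y`, extended by zero. -/
noncomputable def orbitWave (v : ι → ℝ) : G → ℂ :=
  planeWave (fun γ i => (L.pos γ i : ℝ)) v * fun γ => if L.orbit γ = y then 1 else 0

lemma norm_orbitWave_le (v : ι → ℝ) (γ : G) : ‖orbitWave L y v γ‖ ≤ 1 := by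
  rw [orbitWave, norm_planeWave_mul]
  split_ifs <;> simp

lemma isQuasiperiodic_orbitWave (v : ι → ℝ) : L.IsQuasiperiodic v (orbitWave L y v) := by
  intro z γ
  simp only [orbitWave, planeWave, Pi.mul_apply, L.orbit_trans_mul, L.pos_trans_mul]
  rw [← mul_assoc, ← Complex.exp_add, ← add_mul, ← Complex.ofReal_add, ← Finset.sum_add_distrib]
  simp only [Pi.add_apply, Int.cast_add, mul_add]

lemma continuous_orbitWave (γ : G) : Continuous fun v => orbitWave L y v γ :=
  (continuous_planeWave _ γ).mul continuous_const

variable {p q : G → ℝ}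

lemma continuous_markovOp_orbitWave (hp : IsProb p) (γ : G) :
    Continuous fun v => markovOp p (orbitWave L y v) γ :=
  continuous_tsum (fun _ => (continuous_orbitWave L y _).const_smul _)
    (hp.summable.mul_right 1) fun _ v => hp.norm_smul_le (norm_orbitWave_le L y v _)

lemma setIntegral_frequencyCube_mul_orbitWave (s₀ s : G) :
    ∫ v in frequencyCube ι, planeWave (fun γ i => -(L.pos γ i : ℝ)) v s₀
        * orbitWave L (L.orbit s₀) v s
      = if s = s₀ then ((2 * Real.pi : ℝ) : ℂ) ^ Fintype.card ι else 0 := by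
  by_cases horbit : L.orbit s = L.orbit s₀
  · have hdiff : ∀ v : ι → ℝ, planeWave (fun γ i => -(L.pos γ i : ℝ)) v s₀
        * orbitWave L (L.orbit s₀) v s
        = Complex.exp ((∑ i, v i * ((L.pos s - L.pos s₀) i : ℤ) : ℝ) * Complex.I) := fun v => by
      rw [orbitWave, Pi.mul_apply, if_pos horbit, mul_one, planeWave, planeWave, ← Complex.exp_add,
        ← add_mul, ← Complex.ofReal_add, ← Finset.sum_add_distrib]
      simp only [Pi.sub_apply, Int.cast_sub, ← mul_add, neg_add_eq_sub]
    simp only [hdiff, setIntegral_frequencyCube_exp]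
    refine if_congr ⟨fun hpos => ?_, fun hs => by rw [hs, sub_self]⟩ rfl rfl
    exact L.coords.injective (Prod.ext (sub_eq_zero.1 hpos) horbit)
  · rw [if_neg fun hs => horbit (congrArg L.orbit hs)]
    simp [orbitWave, horbit]

/-- Fourier inversion. -/
lemma setIntegral_frequencyCube_mul_markovOp_orbitWave [Countable G] (hp : IsProb p) (s₀ : G) :
    ∫ v in frequencyCube ι, planeWave (fun γ i => -(L.pos γ i : ℝ)) v s₀
        * markovOp p (orbitWave L (L.orbit s₀) v) 1
      = p s₀ • ((2 * Real.pi : ℝ) : ℂ) ^ Fintype.card ι := by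
  let F : G → (ι → ℝ) → ℂ := fun s v =>
    p s • (planeWave (fun γ i => -(L.pos γ i : ℝ)) v s₀ * orbitWave L (L.orbit s₀) v s)
  have hF : ∀ s v, ‖F s v‖ ≤ p s * 1 := fun s v => hp.norm_smul_le <| by
    rw [norm_mul, norm_planeWave, one_mul]
    exact norm_orbitWave_le L _ v s
  have hint : ∀ s, Integrable (F s) (volume.restrict (frequencyCube ι)) := fun s =>
    .of_bound (((continuous_planeWave _ s₀).mul (continuous_orbitWave L _ s)).const_smul
      (p s)).aestronglyMeasurable _ (.of_forall (hF s))
  have hsummable : Summable fun s => ∫ v in frequencyCube ι, ‖F s v‖ := by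
    refine .of_nonneg_of_le (fun s => integral_nonneg fun _ => norm_nonneg _) (fun s => ?_)
      ((hp.summable.mul_right 1).mul_left ((volume.restrict (frequencyCube ι)).real Set.univ))
    simpa only [integral_const, smul_eq_mul] using
      integral_mono (hint s).norm (integrable_const _) (hF s)
  have hinv := (hasSum_integral_of_summable_integral_norm hint hsummable).tsum_eq
  simp only [F, integral_smul, setIntegral_frequencyCube_mul_orbitWave, smul_ite, smul_zero,
    tsum_ite_eq] at hinv
  rw [hinv]
  simp only [markovOp, one_mul, ← tsum_mul_left, mul_smul_comm]

lemma abs_sub_mul_le_setIntegral [Countable G] (hp : IsProb p) (hq : IsProb q) (s₀ : G) :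
    |p s₀ - q s₀| * (2 * Real.pi) ^ Fintype.card ι
      ≤ ∫ v in frequencyCube ι, ‖markovOp p (orbitWave L (L.orbit s₀) v) 1
          - markovOp q (orbitWave L (L.orbit s₀) v) 1‖ := by
  have hint : ∀ {r : G → ℝ}, IsProb r → Integrable (fun v =>
      planeWave (fun γ i => -(L.pos γ i : ℝ)) v s₀ * markovOp r (orbitWave L (L.orbit s₀) v) 1)
      (volume.restrict (frequencyCube ι)) := fun hr => by
    refine .of_bound (C := 1) ((continuous_planeWave _ s₀).mul
      (continuous_markovOp_orbitWave L _ hr 1)).aestronglyMeasurable (.of_forall fun v => ?_)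
    rw [norm_mul, norm_planeWave, one_mul]
    exact norm_markovOp_le hr (norm_orbitWave_le L _ v) 1
  have hsub := integral_sub (hint hp) (hint hq)
  rw [setIntegral_frequencyCube_mul_markovOp_orbitWave L hp,
    setIntegral_frequencyCube_mul_markovOp_orbitWave L hq, ← sub_smul] at hsub
  have hnorm := congrArg norm hsub
  rw [norm_smul, norm_pow, Complex.norm_real, Real.norm_eq_abs,
    Real.norm_of_nonneg Real.two_pi_pos.le] at hnorm
  rw [← hnorm]
  refine (norm_integral_le_integral_norm _).trans_eq ?_
  simp only [← mul_sub, norm_mul, norm_planeWave, one_mul]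

end Fourier

section LocalLimit

variable {G ι Δ : Type*} [Group G] {L : LatticeCoords G ι Δ} {M : G → ι → ℝ} {p q : G → ℝ}

lemma IsCenteredWalk.apply_eq_pos_add (h : IsCenteredWalk L M p) (γ : G) (i : ι) :
    M γ i = L.pos γ i + M (L.base (L.orbit γ)) i := by
  conv_lhs => rw [← L.trans_pos_mul_base_orbit γ, h.map_trans_mul]

variable [Fintype ι]

lemma IsCenteredWalk.orbitWave_eq (h : IsCenteredWalk L M p) (y : Δ) (v : ι → ℝ) :
    orbitWave L y v = planeWave (fun x i => -M (L.base x) i) v y •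
      (planeWave M v * fun γ => if L.orbit γ = y then (1 : ℂ) else 0) := by
  funext γ
  rw [orbitWave, Pi.smul_apply, Pi.mul_apply, Pi.mul_apply, smul_eq_mul, ← mul_assoc]
  by_cases hγ : L.orbit γ = y
  · simp only [planeWave]
    rw [← Complex.exp_add, ← add_mul, ← Complex.ofReal_add, ← Finset.sum_add_distrib]
    simp only [← mul_add, h.apply_eq_pos_add γ, hγ, neg_add_cancel_comm_assoc]
  · simp only [if_neg hγ, mul_zero]

lemma integrable_exp_neg_mul_sum_sq {a : ℝ} (ha : 0 < a) :
    Integrable fun w : ι → ℝ => Real.exp (-(a * ∑ i, w i ^ 2)) := by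
  have hprod := Integrable.fintype_prod (𝕜 := ℝ) (ι := ι) (μ := fun _ => (volume : Measure ℝ))
    (f := fun _ x => Real.exp (-a * x ^ 2)) fun _ => integrable_exp_neg_mul_sq ha
  simpa only [← volume_pi, ← Real.exp_sum, neg_mul, Finset.sum_neg_distrib,
    ← Finset.mul_sum] using hprod

lemma sqrt_pow_mul_setIntegral_frequencyCube (f : (ι → ℝ) → ℝ) (n : ℕ) :
    √n ^ Fintype.card ι * ∫ v in frequencyCube ι, f v
      = ∫ w : ι → ℝ, (frequencyCube ι).indicator f fun i => w i / √n := by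
  have hscale := Measure.integral_comp_inv_smul_of_nonneg (volume : Measure (ι → ℝ))
    ((frequencyCube ι).indicator f) (Real.sqrt_nonneg n)
  rw [Module.finrank_fintype_fun_eq_card, integral_indicator measurableSet_frequencyCube,
    smul_eq_mul] at hscale
  simp only [← hscale, div_eq_inv_mul]
  rfl

lemma LatticeCoords.eventually_norm_markovOp_orbitWave_le [Finite Δ] (L : LatticeCoords G ι Δ)
    (hp : IsProb p) (hpos : EventuallyPos p) (y : Δ) :
    ∃ g : (ι → ℝ) → ℝ, Integrable g ∧ (∀ w, 0 ≤ g w) ∧ ∀ᶠ n : ℕ in atTop, ∀ w : ι → ℝ,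
      (fun i => w i / √n) ∈ frequencyCube ι →
        ‖markovOp (convPow p n) (orbitWave L y fun i => w i / √n) 1‖ ≤ g w := by
  obtain ⟨a, ha, N, hN⟩ := L.exists_norm_markovOp_convPow_le_exp_neg_sum_sq hp hpos
  refine ⟨_, integrable_exp_neg_mul_sum_sq ha, fun w => (Real.exp_pos _).le, ?_⟩
  filter_upwards [eventually_ge_atTop N, eventually_gt_atTop 0] with n hnN hn w hw
  have hbound := hN n hnN _ (abs_le_pi_of_mem_frequencyCube hw) _
    (isQuasiperiodic_orbitWave L y _) 1 (norm_orbitWave_le L y _) 1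
  rwa [mul_one, mul_assoc, Finset.mul_sum,
    Finset.sum_congr rfl fun i _ => natCast_mul_div_sqrt_sq (w i) hn] at hbound

variable [Fintype Δ]

lemma tendsto_norm_markovOp_orbitWave_sub (hp : IsCenteredWalk L M p) (hq : IsCenteredWalk L M q)
    (hV : meanVariance L M p = meanVariance L M q) (y : Δ) (w : ι → ℝ) :
    Tendsto (fun n : ℕ => ‖markovOp (convPow p n) (orbitWave L y fun i => w i / √n) 1
      - markovOp (convPow q n) (orbitWave L y fun i => w i / √n) 1‖) atTop (nhds 0) := by
  have hper := LatticeCoords.isPeriodic_comp_orbit (L := L) fun x => if x = y then (1 : ℂ) else 0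
  have hlim := (hp.tendsto_markovOp_planeWave_mul hper w).sub
    (hq.tendsto_markovOp_planeWave_mul hper w)
  rw [hV, sub_self] at hlim
  refine (tendsto_zero_iff_norm_tendsto_zero.1 hlim).congr fun n => ?_
  rw [hp.orbitWave_eq, markovOp_smul, markovOp_smul, Pi.smul_apply, Pi.smul_apply, ← smul_sub,
    norm_smul, norm_planeWave, one_mul]

lemma tendsto_sqrt_pow_mul_setIntegral (hp : IsCenteredWalk L M p) (hq : IsCenteredWalk L M q)
    (hV : meanVariance L M p = meanVariance L M q) (y : Δ) :
    Tendsto (fun n : ℕ => √n ^ Fintype.card ι * ∫ v in frequencyCube ι,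
      ‖markovOp (convPow p n) (orbitWave L y v) 1 - markovOp (convPow q n) (orbitWave L y v) 1‖)
      atTop (nhds 0) := by
  let D : ℕ → (ι → ℝ) → ℝ := fun n v =>
    ‖markovOp (convPow p n) (orbitWave L y v) 1 - markovOp (convPow q n) (orbitWave L y v) 1‖
  have hD : ∀ n, Measurable ((frequencyCube ι).indicator (D n)) := fun n =>
    (((continuous_markovOp_orbitWave L y (hp.isProb.convPow n) 1).sub
      (continuous_markovOp_orbitWave L y (hq.isProb.convPow n) 1)).norm.measurable).indicator
      measurableSet_frequencyCube
  obtain ⟨g, hg, hg0, hgp⟩ := L.eventually_norm_markovOp_orbitWave_le hp.isProb hp.eventuallyPos y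
  obtain ⟨k, hk, hk0, hkq⟩ := L.eventually_norm_markovOp_orbitWave_le hq.isProb hq.eventuallyPos y
  simp only [sqrt_pow_mul_setIntegral_frequencyCube]
  rw [← integral_zero (ι → ℝ) ℝ]
  refine tendsto_integral_filter_of_dominated_convergence (fun w => g w + k w)
    (.of_forall fun n => ((hD n).comp (by fun_prop)).aestronglyMeasurable) ?_ (hg.add hk)
    (.of_forall fun w => ?_)
  · filter_upwards [hgp, hkq] with n hgn hkn
    refine .of_forall fun w => ?_
    by_cases hw : (fun i => w i / √n) ∈ frequencyCube ι
    · rw [Set.indicator_of_mem hw, norm_norm]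
      exact (norm_sub_le _ _).trans (add_le_add (hgn w hw) (hkn w hw))
    · rw [Set.indicator_of_notMem hw, norm_zero]
      exact add_nonneg (hg0 w) (hk0 w)
  · exact squeeze_zero (fun n => Set.indicator_nonneg (fun _ _ => norm_nonneg _) _)
      (fun n => Set.indicator_le_self' (fun _ _ => norm_nonneg _) _)
      (tendsto_norm_markovOp_orbitWave_sub hp hq hV y w)

/-- The local limit theorem, as a comparison of two walks. -/
lemma eventually_sqrt_pow_mul_abs_convPow_sub_le (hp : IsCenteredWalk L M p)
    (hq : IsCenteredWalk L M q) (hV : meanVariance L M p = meanVariance L M q) {ε : ℝ}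
    (hε : 0 < ε) :
    ∀ᶠ n : ℕ in atTop, ∀ s, √n ^ Fintype.card ι * |convPow p n s - convPow q n s| ≤ ε := by
  have := L.countable
  have hpi : (0 : ℝ) < (2 * Real.pi) ^ Fintype.card ι := by positivity
  filter_upwards [eventually_all.2 fun y =>
    (tendsto_sqrt_pow_mul_setIntegral hp hq hV y).eventually_lt_const (mul_pos hε hpi)] with n hn s
  refine le_of_mul_le_mul_right ?_ hpi
  rw [mul_assoc]
  exact (mul_le_mul_of_nonneg_left (abs_sub_mul_le_setIntegral L (hp.isProb.convPow n)
    (hq.isProb.convPow n) s) (by positivity)).trans (hn _).le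

end LocalLimit

section TotalVariation

lemma tv_nonneg {Z : Type*} (p q : Z → ℝ) : 0 ≤ tv p q :=
  mul_nonneg (by norm_num) (tsum_nonneg fun _ => abs_nonneg _)

/-- Outside of `B`, Markov's inequality for the moment of `f` bounds both masses. -/
lemma tv_le_card_mul_add_div {Z : Type*} {p q f : Z → ℝ} (hp : IsProb p) (hq : IsProb q)
    (hf : ∀ z, 0 ≤ f z) (hpf : Summable fun z => p z * f z) (hqf : Summable fun z => q z * f z)
    {η T : ℝ} (hT : 0 < T) {B : Finset Z} (hB : ∀ z, |p z - q z| ≤ η) (hBT : ∀ z ∉ B, T ≤ f z) :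
    tv p q ≤ B.card * η + ((∑' z, p z * f z) + ∑' z, q z * f z) / T := by
  have hbox : HasSum (fun z => if z ∈ B then η else 0) (B.card * η) := by
    have hsum := hasSum_sum_of_ne_finset_zero (f := fun z => if z ∈ B then η else 0)
      (L := SummationFilter.unconditional Z) fun z (hz : z ∉ B) => if_neg hz
    rwa [Finset.sum_ite_mem, Finset.inter_self, Finset.sum_const, nsmul_eq_mul] at hsum
  have htail := hbox.add ((hpf.hasSum.add hqf.hasSum).div_const T)
  have hle : ∀ z, |p z - q z| ≤ (if z ∈ B then η else 0) + (p z * f z + q z * f z) / T := by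
    intro z
    have hpz := hp.nonneg z
    have hqz := hq.nonneg z
    split_ifs with hz
    · exact (hB z).trans (le_add_of_nonneg_right (div_nonneg
        (add_nonneg (mul_nonneg hpz (hf z)) (mul_nonneg hqz (hf z))) hT.le))
    · rw [zero_add, ← add_mul, le_div_iff₀ hT]
      refine mul_le_mul ((abs_sub _ _).trans_eq ?_) (hBT z hz) hT.le (add_nonneg hpz hqz)
      rw [abs_of_nonneg hpz, abs_of_nonneg hqz]
  have hsum := (hp.summable.sub hq.summable).abs.tsum_le_tsum hle htail.summable
  rw [htail.tsum_eq] at hsum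
  have hnonneg := tv_nonneg p q
  rw [tv] at hnonneg ⊢
  linarith

variable {G ι Δ : Type*} [Group G] [Fintype ι] {L : LatticeCoords G ι Δ} {M : G → ι → ℝ}
  {p q : G → ℝ}

namespace IsCenteredWalk

lemma hasSum_mul_sum_sq (h : IsCenteredWalk L M p) (γ : G) :
    HasSum (fun s => p s * ∑ i, M (γ * s) i ^ 2)
      (∑ i, M γ i ^ 2 + ∑' s, p s * ∑ i, (M (γ * s) i - M γ i) ^ 2) := by
  have hcross : HasSum (fun s => ∑ i, 2 * M γ i * (p s * (M (γ * s) i - M γ i))) 0 := by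
    simpa using hasSum_sum (s := Finset.univ) fun i _ => (h.hasSum_mul_sub γ i).mul_left (2 * M γ i)
  have hincr : Summable fun s => p s * ∑ i, (M (γ * s) i - M γ i) ^ 2 := by
    simp only [Finset.mul_sum]
    exact summable_sum fun i _ => h.summable_mul_sub_sq γ i
  have hsum := ((h.isProb.hasSum_smul_const (∑ i, M γ i ^ 2)).add hcross).add hincr.hasSum
  rw [add_zero] at hsum
  refine hsum.congr_fun fun s => ?_
  simp only [smul_eq_mul, Finset.mul_sum, ← Finset.sum_add_distrib]
  exact Finset.sum_congr rfl fun i _ => by ring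

lemma exists_tsum_convPow_mul_sum_sq_le [Finite Δ] (h : IsCenteredWalk L M p) :
    ∃ C, 0 ≤ C ∧ ∀ n : ℕ, Summable (fun g => convPow p n g * ∑ i, M g i ^ 2) ∧
      ∑' g, convPow p n g * ∑ i, M g i ^ 2 ≤ ∑ i, M 1 i ^ 2 + n * C := by
  have hper : L.IsPeriodic fun γ => ∑' s, p s * ∑ i, (M (γ * s) i - M γ i) ^ 2 := fun z γ => by
    simp only [mul_assoc, h.map_trans_mul, add_sub_add_left_eq_sub]
  obtain ⟨C, hC⟩ := hper.exists_norm_le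
  refine ⟨C, (norm_nonneg _).trans (hC 1), tsum_convPow_mul_le_of_markovOp_le h.isProb
    (fun g => Finset.sum_nonneg fun i _ => sq_nonneg _)
    (fun γ => (h.hasSum_mul_sum_sq γ).summable) fun γ => ?_⟩
  exact (h.hasSum_mul_sum_sq γ).tsum_eq.trans_le
    (add_le_add_right ((le_abs_self _).trans (hC γ)) _)

end IsCenteredWalk

namespace LatticeCoords

variable [Fintype Δ]

variable (L) in
/-- The points at distance at most `m`, for the sup norm, of the base points of their orbits. -/
noncomputable def box (m : ℕ) : Finset G :=
  (Fintype.piFinset (fun _ => Finset.Icc (-(m : ℤ)) m) ×ˢ Finset.univ).map L.coords.symm.toEmbedding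

lemma mem_box {m : ℕ} {γ : G} : γ ∈ L.box m ↔ ∀ i, |L.pos γ i| ≤ m := by
  simp [box, Finset.mem_map_equiv, abs_le, pos]

lemma card_box (m : ℕ) : (L.box m).card = (2 * m + 1) ^ Fintype.card ι * Fintype.card Δ := by
  have hside : ((m : ℤ) + 1 - -m).toNat = 2 * m + 1 := by omega
  rw [box, Finset.card_map, Finset.card_product, Fintype.card_piFinset]
  simp only [Int.card_Icc, hside, Finset.prod_const, Finset.card_univ]

end LatticeCoords

lemma IsCenteredWalk.exists_card_le_of_sum_sq_lt [Finite Δ] (h : IsCenteredWalk L M p) (T : ℝ) :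
    ∃ K : ℝ, 0 < K ∧ ∀ n : ℕ, 1 ≤ n → ∃ B : Finset G,
      (B.card : ℝ) ≤ K * √n ^ Fintype.card ι ∧ ∀ γ ∉ B, T * n ≤ ∑ i, M γ i ^ 2 := by
  obtain ⟨c, hc⟩ :=
    (LatticeCoords.isPeriodic_comp_orbit (L := L) fun x => M (L.base x)).exists_norm_le
  have hc0 : 0 ≤ c := (norm_nonneg _).trans (hc 1)
  have := Real.sqrt_nonneg T
  have := Fintype.ofFinite Δ
  have : Nonempty Δ := ⟨L.orbit 1⟩
  refine ⟨(2 * √T + 2 * c + 3) ^ Fintype.card ι * Fintype.card Δ, by positivity, fun n hn =>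
    ⟨L.box ⌈√T * √n + c⌉₊, ?_, fun γ hγ => ?_⟩⟩
  · have hs : 1 ≤ √(n : ℝ) := Real.one_le_sqrt.2 (by exact_mod_cast hn)
    have hside : 2 * (⌈√T * √n + c⌉₊ : ℝ) + 1 ≤ (2 * √T + 2 * c + 3) * √n := by
      nlinarith [mul_le_mul_of_nonneg_left hs hc0,
        Nat.ceil_lt_add_one (show 0 ≤ √T * √n + c by positivity)]
    rw [LatticeCoords.card_box, mul_right_comm, ← mul_pow]
    push_cast
    gcongr
  · obtain ⟨i, hi⟩ := not_forall.1 (mt LatticeCoords.mem_box.2 hγ)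
    have hbase := (norm_le_pi_norm (M (L.base (L.orbit γ))) i).trans (hc γ)
    have hpos : √T * √n + c < |(L.pos γ i : ℝ)| :=
      (Nat.le_ceil _).trans_lt (by exact_mod_cast not_le.1 hi)
    have hM : √T * √n ≤ |M γ i| := by
      have htri := abs_sub_abs_le_abs_sub (L.pos γ i : ℝ) (-M (L.base (L.orbit γ)) i)
      rw [sub_neg_eq_add, ← h.apply_eq_pos_add, abs_neg,
        ← Real.norm_eq_abs (M (L.base _) i)] at htri
      linarith
    rw [← Real.sqrt_mul' T (Nat.cast_nonneg n), Real.sqrt_le_left (abs_nonneg _), sq_abs] at hM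
    exact hM.trans (Finset.single_le_sum (f := fun i => M γ i ^ 2) (fun _ _ => sq_nonneg _)
      (Finset.mem_univ i))

theorem tendsto_tv_convPow [Fintype Δ] (hp : IsCenteredWalk L M p) (hq : IsCenteredWalk L M q)
    (hV : meanVariance L M p = meanVariance L M q) :
    Tendsto (fun n : ℕ => tv (convPow p n) (convPow q n)) atTop (nhds 0) := by
  obtain ⟨C, hC0, hC⟩ := hp.exists_tsum_convPow_mul_sum_sq_le
  obtain ⟨D, hD0, hD⟩ := hq.exists_tsum_convPow_mul_sum_sq_le
  have hM : ∀ g, 0 ≤ ∑ i, M g i ^ 2 := fun g => Finset.sum_nonneg fun i _ => sq_nonneg _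
  rw [Metric.tendsto_nhds]
  intro ε hε
  set S := 2 * ∑ i, M 1 i ^ 2 + C + D
  have hS0 : 0 ≤ S := by linarith [hM 1]
  obtain ⟨K, hK, hB⟩ := hp.exists_card_le_of_sum_sq_lt (4 * (S + 1) / ε)
  filter_upwards [eventually_sqrt_pow_mul_abs_convPow_sub_le hp hq hV
    (show 0 < ε / (4 * K) by positivity), eventually_ge_atTop 1] with n hn hn1
  obtain ⟨B, hcard, hBT⟩ := hB n hn1
  replace hn1 : (1 : ℝ) ≤ n := by exact_mod_cast hn1
  have hs : 0 < √(n : ℝ) ^ Fintype.card ι := by positivity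
  rw [Real.dist_0_eq_abs, abs_of_nonneg (tv_nonneg _ _)]
  calc tv (convPow p n) (convPow q n)
      ≤ B.card * (ε / (4 * K) / √n ^ Fintype.card ι) + ((∑' g, convPow p n g * ∑ i, M g i ^ 2)
          + ∑' g, convPow q n g * ∑ i, M g i ^ 2) / (4 * (S + 1) / ε * n) :=
        tv_le_card_mul_add_div (hp.isProb.convPow n) (hq.isProb.convPow n) hM (hC n).1 (hD n).1
          (by positivity) (fun z => (le_div_iff₀' hs).2 (hn z)) hBT
    _ ≤ K * √n ^ Fintype.card ι * (ε / (4 * K) / √n ^ Fintype.card ι)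
          + (S + 1) * n / (4 * (S + 1) / ε * n) := by
        gcongr
        nlinarith [(hC n).2, (hD n).2, hM 1]
    _ = ε / 2 := by
        field_simp
        norm_num
    _ < ε := half_lt_self hε

end TotalVariation

section LatticeExistence

/-- The coordinates given by an embedding `t` of `ι → ℤ` and a right transversal of its range. -/
noncomputable def LatticeCoords.ofIsComplement {G ι : Type*} [Group G]
    {t : Multiplicative (ι → ℤ) →* G} (ht : Function.Injective t) {T : Set G}
    (hT : Subgroup.IsComplement (t.range : Set G) T) : LatticeCoords G ι T where
  trans z := t (.ofAdd z)
  coords := hT.equiv.trans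
    (((MonoidHom.ofInjective ht).symm.toEquiv.trans Multiplicative.toAdd).prodCongr (.refl T))
  coords_trans_mul z γ := by
    have h := hT.equiv_mul_left ⟨t (.ofAdd z), .ofAdd z, rfl⟩ γ
    refine Prod.ext ?_ (congrArg Prod.snd h :)
    refine (congrArg (fun y => ((MonoidHom.ofInjective ht).symm y.1).toAdd) h).trans ?_
    rw [map_mul, toAdd_mul]
    exact congrArg (fun y => y.toAdd + _) ((MonoidHom.ofInjective ht).symm_apply_apply (.ofAdd z))

lemma exists_injective_finiteIndex_range (A : Type*) [CommGroup A] [Group.FG A] :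
    ∃ ι : Type, Finite ι ∧ ∃ t : Multiplicative (ι → ℤ) →* A,
      Function.Injective t ∧ t.range.FiniteIndex := by
  obtain ⟨τ, ι, _, _, p, hp, k, ⟨e⟩⟩ := CommGroup.equiv_free_prod_prod_multiplicative_zmod A
  have (i : τ) : NeZero (p i ^ k i) := ⟨pow_ne_zero _ (hp i).ne_zero⟩
  have (i : τ) : Finite (Multiplicative (ZMod (p i ^ k i))) := inferInstanceAs (Finite (ZMod _))
  let t := (e.symm.toMonoidHom.comp (MonoidHom.inl _ _)).comp
    (MulEquiv.funMultiplicative ι ℤ).toMonoidHom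
  let torsionPart := (MonoidHom.snd _ _).comp e.toMonoidHom
  refine ⟨ι, inferInstance, t, (e.symm.injective.comp (Prod.mk_left_injective 1)).comp
    (MulEquiv.funMultiplicative ι ℤ).injective, ?_⟩
  refine Subgroup.finiteIndex_of_le (H := torsionPart.ker) fun a ha => ?_
  refine ⟨(MulEquiv.funMultiplicative ι ℤ).symm (e a).1, e.symm_apply_eq.2 ?_⟩
  exact Prod.ext rfl ha.symm

lemma exists_latticeCoords.{u} {G : Type u} [Group G] (hFG : Group.FG G) (hVA : VirtAbelian G) :
    ∃ ι : Type, ∃ Δ : Type u, Finite ι ∧ Finite Δ ∧ Nonempty (LatticeCoords G ι Δ) := by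
  obtain ⟨A, hA, hcomm⟩ := hVA
  have : A.FiniteIndex := ⟨hA⟩
  let _ : CommGroup A := { (inferInstance : Group A) with mul_comm := hcomm }
  have : Group.FG A := A.fg_of_index_ne_zero
  obtain ⟨ι, hι, t, ht, hrange⟩ := exists_injective_finiteIndex_range A
  have : (A.subtype.comp t).range.FiniteIndex := ⟨by
    rw [MonoidHom.range_comp, Subgroup.index_map_subtype]
    exact mul_ne_zero hrange.index_ne_zero hA⟩
  obtain ⟨T, hT, -⟩ := (A.subtype.comp t).range.exists_isComplement_right 1
  exact ⟨ι, T, hι, hT.finite_right, ⟨.ofIsComplement (A.subtype_injective.comp ht) hT⟩⟩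

end LatticeExistence

section Corrector

lemma exists_list_length_eq_wordLength {G : Type*} [Group G] {S₀ : Finset G}
    (hsym : ∀ s ∈ S₀, s⁻¹ ∈ S₀) (hgen : Subgroup.closure (S₀ : Set G) = ⊤) (g : G) :
    ∃ l : List G, (∀ s ∈ l, s ∈ S₀) ∧ l.length = wordLength S₀ g ∧ l.prod = g := by
  refine Nat.sInf_mem (s := {n | ∃ l : List G, (∀ s ∈ l, s ∈ S₀) ∧ l.length = n ∧ l.prod = g}) ?_
  have hg : g ∈ (Subgroup.closure (S₀ : Set G)).toSubmonoid := by simp [hgen]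
  rw [Subgroup.closure_toSubmonoid] at hg
  obtain ⟨l, hl, rfl⟩ := Submonoid.exists_list_of_mem_closure hg
  exact ⟨_, l, fun s hs => (hl s hs).elim id fun h => by simpa using hsym _ h, rfl, rfl⟩

lemma summable_mul_mul_of_sq {α : Type*} {p a b : α → ℝ} (hp : ∀ s, 0 ≤ p s)
    (ha : Summable fun s => p s * a s ^ 2) (hb : Summable fun s => p s * b s ^ 2) :
    Summable fun s => p s * (a s * b s) := by
  refine .of_norm_bounded (ha.add hb) fun s => ?_
  rw [norm_mul, Real.norm_of_nonneg (hp s), Real.norm_eq_abs, abs_mul, ← mul_add]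
  refine mul_le_mul_of_nonneg_left ?_ (hp s)
  nlinarith [two_mul_le_add_sq |a s| |b s|, sq_abs (a s), sq_abs (b s), abs_nonneg (a s),
    abs_nonneg (b s), mul_nonneg (abs_nonneg (a s)) (abs_nonneg (b s))]

variable {G ι Δ : Type*} [Group G] (L : LatticeCoords G ι Δ)

namespace LatticeCoords

/-- The change of the `i`-th coordinate of the position of `γ` when `γ` is multiplied by `s` on the
right. -/
def displacement (i : ι) (s γ : G) : ℤ := L.pos (γ * s) i - L.pos γ i

lemma isPeriodic_displacement (i : ι) (s : G) : L.IsPeriodic (L.displacement i s) := fun z γ => by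
  simp only [displacement, mul_assoc, pos_trans_mul, Pi.add_apply, add_sub_add_left_eq_sub]

lemma displacement_one (i : ι) (γ : G) : L.displacement i 1 γ = 0 := by simp [displacement]

lemma displacement_mul (i : ι) (s s' γ : G) :
    L.displacement i (s * s') γ = L.displacement i s γ + L.displacement i s' (γ * s) := by
  simp only [displacement, ← mul_assoc]
  ring

lemma norm_displacement_list_prod_le {i : ι} {C : ℝ} (l : List G)
    (hC : ∀ s ∈ l, ∀ γ, ‖L.displacement i s γ‖ ≤ C) (γ : G) :
    ‖L.displacement i l.prod γ‖ ≤ C * l.length := by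
  induction l generalizing γ with
  | nil => simp [displacement_one]
  | cons s l ih =>
    rw [List.forall_mem_cons] at hC
    rw [List.prod_cons, displacement_mul, List.length_cons, Nat.cast_succ, mul_add_one, add_comm]
    exact (norm_add_le _ _).trans (add_le_add (ih hC.2 _) (hC.1 γ))

lemma exists_norm_displacement_le_mul_wordLength [Finite Δ] {S₀ : Finset G}
    (hsym : ∀ s ∈ S₀, s⁻¹ ∈ S₀) (hgen : Subgroup.closure (S₀ : Set G) = ⊤) (i : ι) :
    ∃ C, ∀ s γ, ‖L.displacement i s γ‖ ≤ C * wordLength S₀ s := by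
  have hper : L.IsPeriodic fun γ (s : S₀) => L.displacement i s γ := fun z γ =>
    funext fun s => L.isPeriodic_displacement i s z γ
  obtain ⟨C, hC⟩ := hper.exists_norm_le
  refine ⟨C, fun s γ => ?_⟩
  obtain ⟨l, hl, hlen, rfl⟩ := exists_list_length_eq_wordLength hsym hgen s
  rw [← hlen]
  exact L.norm_displacement_list_prod_le l
    (fun s hs γ => (norm_le_pi_norm _ (⟨s, hl s hs⟩ : S₀)).trans (hC γ)) γ

variable {μ : G → ℝ}

lemma summable_mul_displacement_sq [Finite Δ] (hμ : IsProb μ) (hmom : FinSecondMoment μ) (i : ι)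
    (γ : G) : Summable fun s => μ s * (L.displacement i s γ : ℝ) ^ 2 := by
  obtain ⟨S₀, hsym, hgen, hsum⟩ := hmom
  obtain ⟨C, hC⟩ := L.exists_norm_displacement_le_mul_wordLength hsym hgen i
  refine .of_nonneg_of_le (fun s => mul_nonneg (hμ.nonneg s) (sq_nonneg _)) (fun s => ?_)
    (hsum.mul_left (C ^ 2))
  have hsq := pow_le_pow_left₀ (norm_nonneg _) (hC s γ) 2
  rw [Int.norm_eq_abs, sq_abs, mul_pow] at hsq
  exact (mul_le_mul_of_nonneg_left hsq (hμ.nonneg s)).trans_eq (by ring)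

lemma summable_mul_displacement_add_sub_sq [Finite Δ] (hμ : IsProb μ)
    (hmom : FinSecondMoment μ) (i : ι) {r : G → ℝ} (hr : L.IsPeriodic r) (γ : G) :
    Summable fun s => μ s * (L.displacement i s γ + (r (γ * s) - r γ)) ^ 2 := by
  have hd := L.summable_mul_displacement_sq hμ hmom i γ
  obtain ⟨C, hC⟩ := hr.exists_norm_le
  have hsq : Summable fun s => μ s * (r (γ * s) - r γ) ^ 2 :=
    hμ.summable_smul (C := (C + C) ^ 2) fun s => by
      rw [norm_pow]
      exact pow_le_pow_left₀ (norm_nonneg _) ((norm_sub_le _ _).trans (add_le_add (hC _) (hC _))) 2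
  refine ((hd.add ((summable_mul_mul_of_sq hμ.nonneg hd hsq).mul_left 2)).add hsq).congr
    fun s => ?_
  ring

variable [Fintype Δ]

/-- The transfer homomorphism of the lattice `ι → ℤ`, composed with the `i`-th coordinate. -/
def transferHom (i : ι) : G →* Multiplicative ℤ :=
  .mk' (fun s => .ofAdd (∑ x, L.displacement i s (L.base x))) fun s s' => by
    simp only [displacement_mul, Finset.sum_add_distrib,
      (L.isPeriodic_displacement i s').sum_base_mul, ofAdd_add]

lemma sum_displacement_base (hhom : ∀ φ : G →* Multiplicative ℤ, ∀ γ, φ γ = 1) (i : ι) (s : G) :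
    ∑ x, L.displacement i s (L.base x) = 0 :=
  hhom (L.transferHom i) s

/-- The mean drift of the coordinate vanishes because the transfer homomorphism does, so a solution
of the Poisson equation absorbs the drift. -/
lemma exists_isPeriodic_hasSum_displacement_add_sub (hμ : IsProb μ) (hpos : EventuallyPos μ)
    (hmom : FinSecondMoment μ) (i : ι) (hzero : ∀ s, ∑ x, L.displacement i s (L.base x) = 0) :
    ∃ r : G → ℝ, L.IsPeriodic r ∧
      ∀ γ, HasSum (fun s => μ s * (L.displacement i s γ + (r (γ * s) - r γ))) 0 := by
  have hsum (γ : G) : Summable fun s => μ s * (L.displacement i s γ : ℝ) := by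
    simpa using summable_mul_mul_of_sq hμ.nonneg (L.summable_mul_displacement_sq hμ hmom i γ)
      (b := 1) (by simpa using hμ.summable)
  obtain ⟨r, ⟨hr, -⟩, hpoisson⟩ := exists_sub_markovOp_eq hμ hpos (L := L)
    (b := fun γ => ∑' s, μ s * (L.displacement i s γ : ℝ))
    ⟨fun z γ => by simp only [L.isPeriodic_displacement i _ z γ], by
      rw [← Summable.tsum_finsetSum fun x _ => hsum _]
      simp only [← Finset.mul_sum, ← Int.cast_sum, hzero, Int.cast_zero, mul_zero, tsum_zero]⟩
  obtain ⟨C, hC⟩ := hr.exists_norm_le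
  refine ⟨r, hr, fun γ => ?_⟩
  have htotal := (hsum γ).hasSum.add
    ((hμ.summable_smul fun s => hC (γ * s)).hasSum.sub (hμ.hasSum_smul_const (r γ)))
  have hγ : r γ - markovOp μ r γ = ∑' s, μ s * (L.displacement i s γ : ℝ) := congrFun hpoisson γ
  rw [← hγ] at htotal
  simpa [mul_add, mul_sub, markovOp] using htotal

end LatticeCoords

lemma exists_isCenteredWalk [Fintype Δ] {μ : G → ℝ} (hμ : IsProb μ) (hpos : EventuallyPos μ)
    (hmom : FinSecondMoment μ) (hhom : ∀ φ : G →* Multiplicative ℤ, ∀ γ, φ γ = 1) :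
    ∃ M : G → ι → ℝ, IsCenteredWalk L M μ ∧
      ∀ s i, ∑ x, (M (L.base x * s) i - M (L.base x) i) = 0 := by
  choose r hr hsum using fun i => L.exists_isPeriodic_hasSum_displacement_add_sub hμ hpos hmom i
    (L.sum_displacement_base hhom i)
  have hincr (γ s : G) (i : ι) : (L.pos (γ * s) i + r i (γ * s)) - (L.pos γ i + r i γ)
      = L.displacement i s γ + (r i (γ * s) - r i γ) := by
    rw [LatticeCoords.displacement, Int.cast_sub]
    ring
  refine ⟨fun γ i => L.pos γ i + r i γ, ⟨hμ, hpos, fun z γ i => ?_, fun γ i => ?_, fun γ i => ?_⟩,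
    fun s i => ?_⟩
  · simp only [L.pos_trans_mul, hr i z γ, Pi.add_apply, Int.cast_add, add_assoc]
  · simpa only [hincr] using hsum i γ
  · simpa only [hincr] using L.summable_mul_displacement_add_sub_sq hμ hmom i (hr i) γ
  · simp only [hincr, Finset.sum_add_distrib, Finset.sum_sub_distrib, (hr i).sum_base_mul, sub_self,
      add_zero, ← Int.cast_sum, L.sum_displacement_base hhom, Int.cast_zero]

end Corrector

section Product

section NoisedSums

variable {α β : Type*}

lemma hasSum_mul_prod {f : α → ℝ} {g : β → ℝ} {A B : ℝ} (hf : HasSum f A) (hg : HasSum g B) :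
    HasSum (fun x : α × β => f x.1 * g x.2) (A * B) :=
  hf.mul hg (summable_mul_of_summable_norm hf.summable.norm hg.summable.norm)

lemma IsProb.hasSum_mul_mul_fst {μ f : α → ℝ} {ν : β → ℝ} (hν : IsProb ν) {A : ℝ}
    (h : HasSum (fun s => μ s * f s) A) : HasSum (fun x : α × β => μ x.1 * ν x.2 * f x.1) A := by
  simpa only [mul_one, mul_right_comm] using hasSum_mul_prod h hν.2

lemma IsProb.hasSum_mul_mul_snd {μ : α → ℝ} {ν f : β → ℝ} (hμ : IsProb μ) {A : ℝ}
    (h : HasSum (fun s => ν s * f s) A) : HasSum (fun x : α × β => μ x.1 * ν x.2 * f x.2) A := by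
  simpa only [one_mul, mul_assoc] using hasSum_mul_prod hμ.2 h

variable {μ a b : α → ℝ} (ρ : ℝ)

lemma IsProb.hasSum_noised_mul_fst (hμ : IsProb μ) {A : ℝ} (h : HasSum (fun s => μ s * a s) A) :
    HasSum (fun x => NSVA.noised μ ρ x * a x.1) A := by
  simpa [← add_mul] using hasSum_noised_smul ρ (hμ.hasSum_mul_mul_fst h) h

lemma IsProb.hasSum_noised_mul_snd (hμ : IsProb μ) {A : ℝ} (h : HasSum (fun s => μ s * a s) A) :
    HasSum (fun x => NSVA.noised μ ρ x * a x.2) A := by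
  simpa [← add_mul] using hasSum_noised_smul ρ (hμ.hasSum_mul_mul_snd h) h

/-- The cross term survives on the diagonal only, the two coordinates being independent and centered
under `μ × μ`. -/
lemma IsProb.hasSum_noised_mul_add_sq (hμ : IsProb μ) (ha : HasSum (fun s => μ s * a s) 0)
    (hb : HasSum (fun s => μ s * b s) 0) (ha2 : Summable fun s => μ s * a s ^ 2)
    (hb2 : Summable fun s => μ s * b s ^ 2) :
    HasSum (fun s => NSVA.noised μ ρ s * (a s.1 + b s.2) ^ 2)
      (∑' s, μ s * a s ^ 2 + ∑' s, μ s * b s ^ 2 + 2 * (1 - ρ) * ∑' s, μ s * (a s * b s)) := by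
  have hcross := hasSum_noised_smul ρ (F := fun x : α × α => a x.1 * b x.2)
    ((hasSum_mul_prod ha hb).congr_fun fun x => by rw [smul_eq_mul]; ring)
    (summable_mul_mul_of_sq hμ.nonneg ha2 hb2).hasSum
  convert! ((hμ.hasSum_noised_mul_fst ρ ha2.hasSum).add
    (hμ.hasSum_noised_mul_snd ρ hb2.hasSum)).add (hcross.mul_left 2) using 1
  · funext x
    rw [smul_eq_mul]
    ring
  · simp only [mul_zero, zero_add, smul_eq_mul, mul_assoc]

end NoisedSums

variable {G ι Δ : Type*} [Group G]

/-- The coordinates on `G × G` given by the coordinates of both factors. -/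
def LatticeCoords.square (L : LatticeCoords G ι Δ) : LatticeCoords (G × G) (ι ⊕ ι) (Δ × Δ) where
  trans z := (L.trans (z ∘ Sum.inl), L.trans (z ∘ Sum.inr))
  coords := ((L.coords.prodCongr L.coords).trans (Equiv.prodProdProdComm _ _ _ _)).trans
    ((Equiv.sumArrowEquivProdArrow ι ι ℤ).symm.prodCongr (Equiv.refl _))
  coords_trans_mul z γ := by
    refine Prod.ext (funext fun i => ?_) (by simp [L.coords_trans_mul])
    rcases i with i | i <;> simp [L.coords_trans_mul]

lemma LatticeCoords.base_square (L : LatticeCoords G ι Δ) (x : Δ × Δ) :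
    L.square.base x = (L.base x.1, L.base x.2) := rfl

/-- The map `M` applied to both coordinates. -/
def pairMap (M : G → ι → ℝ) (γ : G × G) : ι ⊕ ι → ℝ := Sum.elim (M γ.1) (M γ.2)

lemma increment_pairMap [Fintype ι] (M : G → ι → ℝ) (w : ι ⊕ ι → ℝ) (γ s : G × G) :
    increment (pairMap M) w γ s
      = increment M (w ∘ Sum.inl) γ.1 s.1 + increment M (w ∘ Sum.inr) γ.2 s.2 := by
  simp [increment, pairMap]

namespace IsCenteredWalk

variable {L : LatticeCoords G ι Δ} {M : G → ι → ℝ} {μ : G → ℝ}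

lemma square (h : IsCenteredWalk L M μ) {ρ : ℝ} (h0 : 0 < ρ) (h1 : ρ ≤ 1) :
    IsCenteredWalk L.square (pairMap M) (noised μ ρ) where
  isProb := h.isProb.noised h0.le h1
  eventuallyPos := h.eventuallyPos.noised h.isProb h0 h1
  map_trans_mul z γ := by rintro (i | i) <;> exact h.map_trans_mul _ _ _
  hasSum_mul_sub γ := by
    rintro (i | i)
    · exact h.isProb.hasSum_noised_mul_fst ρ (h.hasSum_mul_sub γ.1 i)
    · exact h.isProb.hasSum_noised_mul_snd ρ (h.hasSum_mul_sub γ.2 i)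
  summable_mul_sub_sq γ := by
    rintro (i | i)
    · exact (h.isProb.hasSum_noised_mul_fst ρ (h.summable_mul_sub_sq γ.1 i).hasSum).summable
    · exact (h.isProb.hasSum_noised_mul_snd ρ (h.summable_mul_sub_sq γ.2 i).hasSum).summable

variable [Fintype ι]

lemma incrementVariance_noised (h : IsCenteredWalk L M μ) (ρ : ℝ) (w : ι ⊕ ι → ℝ) (γ : G × G) :
    incrementVariance (pairMap M) (noised μ ρ) w γ
      = incrementVariance M μ (w ∘ Sum.inl) γ.1 + incrementVariance M μ (w ∘ Sum.inr) γ.2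
        + 2 * (1 - ρ) *
          ∑' s, μ s * (increment M (w ∘ Sum.inl) γ.1 s * increment M (w ∘ Sum.inr) γ.2 s) := by
  rw [incrementVariance]
  simp only [increment_pairMap]
  exact (h.isProb.hasSum_noised_mul_add_sq ρ (h.hasSum_increment _ _) (h.hasSum_increment _ _)
    (h.summable_increment_sq _ _) (h.summable_increment_sq _ _)).tsum_eq

variable [Fintype Δ]

lemma sum_tsum_mul_increment_mul_increment (h : IsCenteredWalk L M μ)
    (hM : ∀ s i, ∑ x, (M (L.base x * s) i - M (L.base x) i) = 0) (w w' : ι → ℝ) :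
    ∑ x : Δ × Δ, ∑' s, μ s * (increment M w (L.base x.1) s * increment M w' (L.base x.2) s)
      = 0 := by
  have hzero (s : G) : ∑ x, increment M w (L.base x) s = 0 := by
    simp only [increment]
    rw [Finset.sum_comm]
    simp only [← Finset.mul_sum, hM, mul_zero, Finset.sum_const_zero]
  rw [← Summable.tsum_finsetSum fun x _ => summable_mul_mul_of_sq h.isProb.nonneg
    (h.summable_increment_sq w _) (h.summable_increment_sq w' _)]
  simp only [← Finset.mul_sum, Fintype.sum_prod_type, ← Finset.sum_mul, hzero, zero_mul, mul_zero,
    tsum_zero]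

lemma meanVariance_noised (h : IsCenteredWalk L M μ)
    (hM : ∀ s i, ∑ x, (M (L.base x * s) i - M (L.base x) i) = 0) (ρ : ℝ) (w : ι ⊕ ι → ℝ) :
    meanVariance L.square (pairMap M) (noised μ ρ) w
      = meanVariance L M μ (w ∘ Sum.inl) + meanVariance L M μ (w ∘ Sum.inr) := by
  have : Nonempty Δ := ⟨L.orbit 1⟩
  have hcard : (Fintype.card Δ : ℝ) ≠ 0 := Nat.cast_ne_zero.2 Fintype.card_ne_zero
  simp only [meanVariance, L.base_square, h.incrementVariance_noised, Finset.sum_add_distrib]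
  rw [← Finset.mul_sum, h.sum_tsum_mul_increment_mul_increment hM]
  simp only [Fintype.sum_prod_type, Finset.sum_const, Finset.card_univ, nsmul_eq_mul,
    ← Finset.mul_sum, Fintype.card_prod, Nat.cast_mul]
  field_simp
  ring

end IsCenteredWalk

theorem tendsto_tv_noised [Finite ι] [Finite Δ] (L : LatticeCoords G ι Δ)
    {μ : G → ℝ} (hμ : IsProb μ) (hpos : EventuallyPos μ) (hmom : FinSecondMoment μ)
    (hhom : ∀ φ : G →* Multiplicative ℤ, ∀ γ, φ γ = 1) {ρ : ℝ} (h0 : 0 < ρ) (h1 : ρ ≤ 1) :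
    Tendsto (fun n : ℕ => tv (convPow (noised μ ρ) n) fun x => convPow μ n x.1 * convPow μ n x.2)
      atTop (nhds 0) := by
  have := Fintype.ofFinite ι
  have := Fintype.ofFinite Δ
  obtain ⟨M, hwalk, hM⟩ := exists_isCenteredWalk L hμ hpos hmom hhom
  have hvariance : meanVariance L.square (pairMap M) (noised μ ρ)
      = meanVariance L.square (pairMap M) (noised μ 1) := funext fun w => by
    rw [hwalk.meanVariance_noised hM, hwalk.meanVariance_noised hM]
  simpa only [convPow_noised_one hμ] using
    tendsto_tv_convPow (hwalk.square h0 h1) (hwalk.square one_pos le_rfl) hvariance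

end Product

/-- For an aperiodic, finite-second-moment, non-degenerate probability
measure `μ` on a finitely generated virtually abelian group `Γ`, the `μ`-random walk is
noise sensitive in total variation iff every homomorphism `Γ → ℤ` is zero. -/
theorem noise_sensitive_iff_no_hom_to_int
    {Γ : Type*} [Group Γ] [Countable Γ] (hFG : Group.FG Γ) (hVA : VirtAbelian Γ)
    (μ : Γ → ℝ) (hμ : IsProb μ) (hap : Aperiodic μ) (hmom : FinSecondMoment μ)
    (hnd : Nondeg μ) :
    (∀ ρ : ℝ, 0 < ρ → ρ ≤ 1 →
        Tendsto (fun n : ℕ => tv (convPow (noised μ ρ) n)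
            (fun p : Γ × Γ => convPow μ n p.1 * convPow μ n p.2))
          atTop (nhds 0)) ↔
      ∀ φ : Γ →* Multiplicative ℤ, ∀ γ : Γ, φ γ = 1 := by
  have hpos := eventuallyPos_of_aperiodic_of_nondeg hμ hap hnd
  refine ⟨fun h φ γ => ?_, fun hhom ρ h0 h1 => ?_⟩
  · have hφ := eq_one_of_tendsto_tv_noised hμ hpos (by norm_num) (by norm_num)
      (h (1 / 2) (by norm_num) (by norm_num)) φ
    exact DFunLike.congr_fun hφ γ
  · obtain ⟨ι, Δ, _, _, ⟨L⟩⟩ := exists_latticeCoords hFG hVA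
    exact tendsto_tv_noised L hμ hpos hmom hhom h0 h1


end NSVA
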